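/- arXiv:2412.09672 — 10 statements merged into one kernel-verified Lean document; each statement's English description precedes it below -/
import Mathlib

section
/- Let d ≥ 1, t ≥ 1, and let (U_m)_{m<M} (M ≥ 1) be a unitary t-design in U(d). Let ψ ∈ ℂ^d be a unit vector. Then the family (U_m ψ)_{m<M} is a complex projective t-design; explicitly, for all tuples p, q : Fin t → Fin d one has (1/M) Σ_{m<M} ∏_{n<t} (U_m ψ)(p n) · conj((U_m ψ)(q n)) = ∫_{U(d)} ∏_{n<t} (U ψ)(p n) · conj((U ψ)(q n)) dHaar(U). -/
open MeasureTheory Matrix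

noncomputable instance Matrix.measurableSpace {m n R : Type*} [MeasurableSpace R] :
    MeasurableSpace (Matrix m n R) := inferInstanceAs (MeasurableSpace (m → n → R))

instance Matrix.borelSpace {m n R : Type*} [Countable m] [Countable n]
    [TopologicalSpace R] [MeasurableSpace R] [BorelSpace R] [SecondCountableTopology R] :
    BorelSpace (Matrix m n R) := inferInstanceAs (BorelSpace (m → n → R))

instance {ι : Type*} [Fintype ι] [DecidableEq ι] :
    BorelSpace (Matrix.unitaryGroup ι ℂ) := Subtype.borelSpace _

/-!
The coordinates of `(U ψ ψᴴ Uᴴ)^{⊗ t}` are linear combinations of the monomials of bidegree `(t, t)`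
in the entries of `U` and their conjugates, with coefficients depending only on `ψ`. A design
averages each of these monomials correctly, hence also the linear combinations.
-/

open scoped ComplexConjugate

section Monomials

variable {κ m n R : Type*} [Fintype κ] [CommSemiring R]

theorem prod_mulVec_apply [DecidableEq κ] [Fintype n] (A : Matrix m n R) (v : n → R) (p : κ → m) :
    ∏ a, (A *ᵥ v) (p a) = ∑ k : κ → n, ∏ a, A (p a) (k a) * v (k a) :=
  Fintype.prod_sum fun a i => A (p a) i * v i

variable [StarRing R]

/-- The monomial of bidegree `(t, t)`, `t = |κ|`, in the entries of `A` and their conjugates, that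
is, an entry of `A^{⊗ t} ⊗ conj(A)^{⊗ t}`. Unitary designs are tested on these monomials. -/
def entryMonomial (A : Matrix m n R) (p : κ → m) (k : κ → n) (q : κ → m) (l : κ → n) : R :=
  ∏ a, A (p a) (k a) * conj (A (q a) (l a))

/-- The monomial of bidegree `(t, t)`, `t = |κ|`, in the coordinates of `v` and their conjugates,
that is, an entry of `(v vᴴ)^{⊗ t}`. Projective designs are tested on these monomials. -/
def coordMonomial (v : n → R) (p q : κ → n) : R :=
  ∏ a, v (p a) * conj (v (q a))

theorem coordMonomial_mulVec [DecidableEq κ] [Fintype n] (A : Matrix m n R) (v : n → R)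
    (p q : κ → m) :
    coordMonomial (A *ᵥ v) p q =
      ∑ k : κ → n, ∑ l : κ → n, entryMonomial A p k q l * coordMonomial v k l :=
  calc
    coordMonomial (A *ᵥ v) p q = (∏ a, (A *ᵥ v) (p a)) * conj (∏ a, (A *ᵥ v) (q a)) := by
      rw [coordMonomial, Finset.prod_mul_distrib, map_prod]
    _ = ∑ k : κ → n, ∑ l : κ → n,
          (∏ a, A (p a) (k a) * v (k a)) * conj (∏ a, A (q a) (l a) * v (l a)) := by
      rw [prod_mulVec_apply, prod_mulVec_apply, map_sum, Finset.sum_mul_sum]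
    _ = ∑ k : κ → n, ∑ l : κ → n, entryMonomial A p k q l * coordMonomial v k l := by
      simp only [entryMonomial, coordMonomial, map_prod, map_mul, ← Finset.prod_mul_distrib,
        mul_mul_mul_comm]

theorem continuous_entryMonomial [TopologicalSpace R] [ContinuousMul R] [ContinuousStar R]
    (p : κ → m) (k : κ → n) (q : κ → m) (l : κ → n) :
    Continuous fun A : Matrix m n R => entryMonomial A p k q l :=
  continuous_finsetProd _ fun a _ =>
    (continuous_id.matrix_elem (p a) (k a)).mul (continuous_id.matrix_elem (q a) (l a)).star

end Monomials

section Integrals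

variable {𝕜 κ : Type*} [RCLike 𝕜] [Fintype κ]

theorem integral_coordMonomial_mulVec {Ω m n : Type*} [MeasurableSpace Ω] [DecidableEq κ]
    [Fintype n] {μ : Measure Ω} {A : Ω → Matrix m n 𝕜} {p q : κ → m}
    (hA : ∀ k l : κ → n, Integrable (fun ω => entryMonomial (A ω) p k q l) μ) (v : n → 𝕜) :
    ∫ ω, coordMonomial (A ω *ᵥ v) p q ∂μ =
      ∑ k : κ → n, ∑ l : κ → n, (∫ ω, entryMonomial (A ω) p k q l ∂μ) * coordMonomial v k l := by
  have integrable_term (k l : κ → n) :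
      Integrable (fun ω => entryMonomial (A ω) p k q l * coordMonomial v k l) μ :=
    (hA k l).mul_const _
  simp only [coordMonomial_mulVec]
  rw [integral_finsetSum _ fun k _ => integrable_finsetSum _ fun l _ => integrable_term k l]
  refine Finset.sum_congr rfl fun k _ => ?_
  rw [integral_finsetSum _ fun l _ => integrable_term k l]
  simp only [integral_mul_const]

variable {ι : Type*} [Fintype ι] [DecidableEq ι]

theorem norm_entryMonomial_le_one {A : Matrix ι ι 𝕜} (hA : A ∈ unitaryGroup ι 𝕜)
    (p k q l : κ → ι) : ‖entryMonomial A p k q l‖ ≤ 1 := by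
  rw [entryMonomial, norm_prod]
  refine Finset.prod_le_one (fun _ _ => norm_nonneg _) fun a _ => ?_
  rw [norm_mul, RCLike.norm_conj]
  exact mul_le_one₀ (entry_norm_bound_of_unitary hA _ _) (norm_nonneg _)
    (entry_norm_bound_of_unitary hA _ _)

variable [MeasurableSpace (unitaryGroup ι 𝕜)] [OpensMeasurableSpace (unitaryGroup ι 𝕜)]

theorem integrable_entryMonomial_unitaryGroup (μ : Measure (unitaryGroup ι 𝕜)) [IsFiniteMeasure μ]
    (p k q l : κ → ι) :
    Integrable (fun V : unitaryGroup ι 𝕜 => entryMonomial (V : Matrix ι ι 𝕜) p k q l) μ :=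
  .of_bound ((continuous_entryMonomial p k q l).comp continuous_subtype_val).aestronglyMeasurable 1
    (.of_forall fun V => norm_entryMonomial_le_one V.2 p k q l)

theorem projective_design_of_unitary_design_general {σ : Type*} [Fintype σ]
    (μ : Measure (unitaryGroup ι 𝕜)) [IsFiniteMeasure μ]
    (w : σ → 𝕜) (U : σ → unitaryGroup ι 𝕜)
    (hU : ∀ p k q l : κ → ι,
      ∑ j, w j * entryMonomial (U j : Matrix ι ι 𝕜) p k q l =
        ∫ V : unitaryGroup ι 𝕜, entryMonomial (V : Matrix ι ι 𝕜) p k q l ∂μ)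
    (ψ : ι → 𝕜) (p q : κ → ι) :
    ∑ j, w j * coordMonomial ((U j : Matrix ι ι 𝕜) *ᵥ ψ) p q =
      ∫ V : unitaryGroup ι 𝕜, coordMonomial ((V : Matrix ι ι 𝕜) *ᵥ ψ) p q ∂μ := by
  classical
  calc
    ∑ j, w j * coordMonomial ((U j : Matrix ι ι 𝕜) *ᵥ ψ) p q
    _ = ∑ k : κ → ι, ∑ l : κ → ι,
          (∑ j, w j * entryMonomial (U j : Matrix ι ι 𝕜) p k q l) * coordMonomial ψ k l := by
      simp only [coordMonomial_mulVec, Finset.mul_sum, Finset.sum_mul, mul_assoc]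
      rw [Finset.sum_comm]
      exact Finset.sum_congr rfl fun _ _ => Finset.sum_comm
    _ = ∑ k : κ → ι, ∑ l : κ → ι,
          (∫ V : unitaryGroup ι 𝕜, entryMonomial (V : Matrix ι ι 𝕜) p k q l ∂μ) *
            coordMonomial ψ k l := by
      simp only [hU]
    _ = ∫ V : unitaryGroup ι 𝕜, coordMonomial ((V : Matrix ι ι 𝕜) *ᵥ ψ) p q ∂μ :=
      (integral_coordMonomial_mulVec
        (fun k l => integrable_entryMonomial_unitaryGroup μ p k q l) ψ).symm

end Integrals

/-- A unitary `t`-design acting on a fixed unit vector yields a complex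
projective `t`-design. -/
theorem projective_design_of_unitary_design
    (d t M : ℕ) (hd : 1 ≤ d) (ht : 1 ≤ t) (hM : 1 ≤ M)
    (μ : Measure (Matrix.unitaryGroup (Fin d) ℂ)) [μ.IsHaarMeasure] [IsProbabilityMeasure μ]
    (U : Fin M → Matrix.unitaryGroup (Fin d) ℂ)
    (hU : ∀ p q r s : Fin t → Fin d,
      (1 / M : ℂ) * ∑ m, ∏ n, U m (p n) (q n) * (starRingEnd ℂ) (U m (r n) (s n)) =
        ∫ V : Matrix.unitaryGroup (Fin d) ℂ,
          ∏ n, V (p n) (q n) * (starRingEnd ℂ) (V (r n) (s n)) ∂μ)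
    (ψ : Fin d → ℂ) (hψ : ∑ i, ‖ψ i‖ ^ 2 = 1) :
    ∀ p q : Fin t → Fin d,
      (1 / M : ℂ) * ∑ m, ∏ n,
          (U m : Matrix (Fin d) (Fin d) ℂ).mulVec ψ (p n) *
            (starRingEnd ℂ) ((U m : Matrix (Fin d) (Fin d) ℂ).mulVec ψ (q n)) =
        ∫ V : Matrix.unitaryGroup (Fin d) ℂ,
          ∏ n, (V : Matrix (Fin d) (Fin d) ℂ).mulVec ψ (p n) *
            (starRingEnd ℂ) ((V : Matrix (Fin d) (Fin d) ℂ).mulVec ψ (q n)) ∂μ := by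
  simp only [Finset.mul_sum] at hU ⊢
  exact projective_design_of_unitary_design_general μ (fun _ => 1 / (M : ℂ)) U hU ψ
end

section
/- (Welch bound.) Let d ≥ 1, t ≥ 1, and let ψ_1, …, ψ_M ∈ ℂ^d (M ≥ 1) be unit vectors. Then Σ_{i=1}^{M} Σ_{j=1}^{M} |⟨ψ_i, ψ_j⟩|^{2t} ≥ M² / C(d+t−1, t), where C(d+t−1, t) is the binomial coefficient (the dimension of the t-fold symmetric subspace of (ℂ^d)^{⊗t}). -/
open MeasureTheory

/-!
Both `Aᴴ * A` and `A * Aᴴ` have the same trace and the same Frobenius norm, while Cauchy–Schwarz on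
the diagonal bounds the trace of a matrix by its Frobenius norm and its size. Applied to the Gram
matrix `Aᴴ * A` of a family of vectors in a space of dimension `n`, the size that enters is the
size `n` of `A * Aᴴ` and not the number of vectors; this is the case `t = 1`. The case of general
`t` is the case `t = 1` for the symmetric tensor powers of the vectors: these have inner products
`⟪x, y⟫ ^ t` and lie in a space of dimension `Nat.multichoose n t`.
-/

open Matrix Module

variable {𝕜 : Type*} [RCLike 𝕜]

section Matrix

variable {m n : Type*} [Fintype m] [Fintype n]

lemma trace_conjTranspose_mul_self_eq_sum_norm_sq (A : Matrix m n 𝕜) :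
    (Aᴴ * A).trace = ((∑ i, ∑ j, ‖A i j‖ ^ 2 : ℝ) : 𝕜) := by
  simp only [trace, diag_apply, mul_apply, conjTranspose_apply, RCLike.star_def, RCLike.conj_mul]
  push_cast
  exact Finset.sum_comm

lemma sum_norm_sq_mul_conjTranspose_self_eq (A : Matrix m n 𝕜) :
    ∑ k, ∑ l, ‖(A * Aᴴ) k l‖ ^ 2 = ∑ i, ∑ j, ‖(Aᴴ * A) i j‖ ^ 2 := by
  apply RCLike.ofReal_injective (K := 𝕜)
  calc ((∑ k, ∑ l, ‖(A * Aᴴ) k l‖ ^ 2 : ℝ) : 𝕜)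
      = (A * (Aᴴ * A * Aᴴ)).trace := by
        rw [← trace_conjTranspose_mul_self_eq_sum_norm_sq, conjTranspose_mul,
          conjTranspose_conjTranspose]
        simp only [Matrix.mul_assoc]
    _ = (Aᴴ * A * (Aᴴ * A)).trace := by rw [trace_mul_comm, Matrix.mul_assoc]
    _ = ((∑ i, ∑ j, ‖(Aᴴ * A) i j‖ ^ 2 : ℝ) : 𝕜) := by
        rw [← trace_conjTranspose_mul_self_eq_sum_norm_sq, conjTranspose_mul,
          conjTranspose_conjTranspose]

lemma norm_trace_sq_le_card_mul_sum_norm_sq {α : Type*} [SeminormedAddCommGroup α]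
    (B : Matrix n n α) :
    ‖B.trace‖ ^ 2 ≤ Fintype.card n * ∑ i, ∑ j, ‖B i j‖ ^ 2 :=
  calc ‖B.trace‖ ^ 2
      ≤ (∑ i, ‖B i i‖) ^ 2 := by gcongr; exact norm_sum_le _ _
    _ ≤ Fintype.card n * ∑ i, ‖B i i‖ ^ 2 := sq_sum_le_card_mul_sum_sq
    _ ≤ Fintype.card n * ∑ i, ∑ j, ‖B i j‖ ^ 2 := by
        gcongr with i
        exact Finset.single_le_sum (f := fun j ↦ ‖B i j‖ ^ 2) (fun _ _ ↦ sq_nonneg _)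
          (Finset.mem_univ i)

lemma norm_trace_conjTranspose_mul_self_sq_le (A : Matrix m n 𝕜) :
    ‖(Aᴴ * A).trace‖ ^ 2 ≤ Fintype.card m * ∑ i, ∑ j, ‖(Aᴴ * A) i j‖ ^ 2 := by
  rw [trace_mul_comm, ← sum_norm_sq_mul_conjTranspose_self_eq]
  exact norm_trace_sq_le_card_mul_sum_norm_sq (A * Aᴴ)

end Matrix

section InnerProductSpace

variable {E ι : Type*} [Fintype ι]

lemma norm_trace_gram [SeminormedAddCommGroup E] [InnerProductSpace 𝕜 E] (ψ : ι → E) :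
    ‖(gram 𝕜 ψ).trace‖ = ∑ i, ‖ψ i‖ ^ 2 := by
  have trace_gram : (gram 𝕜 ψ).trace = ((∑ i, ‖ψ i‖ ^ 2 : ℝ) : 𝕜) := by
    simp [trace, gram_apply, inner_self_eq_norm_sq_to_K]
  rw [trace_gram, RCLike.norm_ofReal, abs_of_nonneg (by positivity)]

lemma sum_norm_sq_sq_le_finrank_mul_sum_norm_inner_sq [NormedAddCommGroup E]
    [InnerProductSpace 𝕜 E] [FiniteDimensional 𝕜 E] (ψ : ι → E) :
    (∑ i, ‖ψ i‖ ^ 2) ^ 2 ≤ finrank 𝕜 E * ∑ i, ∑ j, ‖inner 𝕜 (ψ i) (ψ j)‖ ^ 2 := by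
  have bound := norm_trace_conjTranspose_mul_self_sq_le
    (of fun k i ↦ (stdOrthonormalBasis 𝕜 E).repr (ψ i) k)
  rw [← gram_eq_conjTranspose_mul, norm_trace_gram, Fintype.card_fin] at bound
  simpa only [gram_apply] using bound

end InnerProductSpace

section Veronese

variable {κ : Type*} [DecidableEq κ]

/-- The normalised Veronese map, sending `x` to the coordinates of its `t`-fold tensor power in the
standard orthonormal basis of the symmetric subspace. The coordinate at a multiset `s` of size `t`
is the monomial of `x` with exponents `s`; the square root of the multinomial coefficient accounts
for the `s.countPerms` coordinates of the full tensor power in which this monomial occurs. -/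
noncomputable def veronese (t : ℕ) (x : EuclideanSpace 𝕜 κ) : EuclideanSpace 𝕜 (Sym κ t) :=
  WithLp.toLp 2 fun s ↦ (√(s : Multiset κ).countPerms : 𝕜) * ((s : Multiset κ).map x).prod

variable [Fintype κ]

lemma inner_veronese (t : ℕ) (x y : EuclideanSpace 𝕜 κ) :
    inner 𝕜 (veronese t x) (veronese t y) = inner 𝕜 x y ^ t := by
  have weight_sq (s : Sym κ t) : (√(s : Multiset κ).countPerms : 𝕜) ^ 2 =
      ((s : Multiset κ).countPerms : 𝕜) := by
    rw [← RCLike.ofReal_pow, Real.sq_sqrt (Nat.cast_nonneg _), RCLike.ofReal_natCast]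
  simp only [PiLp.inner_apply, RCLike.inner_apply, Finset.sum_pow, Finset.sym_univ]
  refine Finset.sum_congr rfl fun s _ ↦ ?_
  simp only [veronese, map_mul, RCLike.conj_ofReal, map_multiset_prod,
    Multiset.map_map, Function.comp_def, Multiset.prod_map_mul]
  rw [mul_mul_mul_comm, ← sq, weight_sq]
  rfl

lemma norm_veronese (t : ℕ) (x : EuclideanSpace 𝕜 κ) : ‖veronese t x‖ = ‖x‖ ^ t := by
  rw [← sq_eq_sq₀ (norm_nonneg _) (by positivity), ← pow_mul, mul_comm t, pow_mul]
  apply RCLike.ofReal_injective (K := 𝕜)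
  push_cast
  rw [← inner_self_eq_norm_sq_to_K, inner_veronese, inner_self_eq_norm_sq_to_K]

end Veronese

theorem welch_bound_general {E ι : Type*} [NormedAddCommGroup E] [InnerProductSpace 𝕜 E]
    [FiniteDimensional 𝕜 E] [Fintype ι] (t : ℕ) (ψ : ι → E) :
    (∑ i, ‖ψ i‖ ^ (2 * t)) ^ 2 ≤
      (finrank 𝕜 E).multichoose t * ∑ i, ∑ j, ‖inner 𝕜 (ψ i) (ψ j)‖ ^ (2 * t) := by
  have bound := sum_norm_sq_sq_le_finrank_mul_sum_norm_inner_sq (𝕜 := 𝕜)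
    fun i ↦ veronese t ((stdOrthonormalBasis 𝕜 E).repr (ψ i))
  simpa only [norm_veronese, inner_veronese, LinearIsometryEquiv.norm_map,
    LinearIsometryEquiv.inner_map_map, finrank_euclideanSpace, Sym.card_sym_eq_multichoose,
    Fintype.card_fin, norm_pow, ← pow_mul, mul_comm t 2] using bound

/-- **Welch bound.** For any family of `M` unit vectors in `ℂ^d`,
`Σ_{i,j} |⟨ψ_i, ψ_j⟩|^{2t} ≥ M² / C(d+t−1, t)`. -/
theorem welch_bound (d t M : ℕ) (hd : 1 ≤ d) (ht : 1 ≤ t) (hM : 1 ≤ M)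
    (ψ : Fin M → (Fin d → ℂ)) (hψ : ∀ m, ∑ i, ‖ψ m i‖ ^ 2 = 1) :
    (M : ℝ) ^ 2 / (Nat.choose (d + t - 1) t) ≤
      ∑ i, ∑ j, ‖∑ a, (starRingEnd ℂ) (ψ i a) * ψ j a‖ ^ (2 * t) := by
  refine div_le_of_le_mul₀ (by positivity) (by positivity) ?_
  have bound := welch_bound_general (𝕜 := ℂ) t fun m ↦ WithLp.toLp 2 (ψ m)
  simpa [EuclideanSpace.norm_eq, hψ, Nat.multichoose_eq, PiLp.inner_apply,
    mul_comm] using bound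
end

section
/- Let d ≥ 1, t ≥ 1, and let (ψ_m)_{m<M} (M ≥ 1) be a complex projective t-design of unit vectors in ℂ^d. Then the Welch bound is saturated: Σ_{i<M} Σ_{j<M} |⟨ψ_i, ψ_j⟩|^{2t} = M² / C(d+t−1, t). -/
open MeasureTheory Matrix

/-!
Let `F x` be the average of `|⟨x, V ψ₀⟩|^{2t}` over the unitary group. Invariance of the measure
makes `F` unitarily invariant, and unitaries act transitively on spheres, so `F x = c ‖x‖^{2t}`. On
the other hand, averaging over diagonal unitaries kills every mixed moment of `V ψ₀`, so the
multinomial theorem expresses `F x` as a polynomial in the `|x i|²` whose coefficients are, up to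
squared multinomial coefficients, the moments `∫ ∏ |(V ψ₀) i|^{2 α i}`. Comparing coefficients, each
of these moments multiplied by the multinomial coefficient of `α` equals `c`; these products add up
to `‖ψ₀‖^{2t}`, and there are `C(d + t - 1, t)` of them. For a design, averages over `ψ` of
polynomials of bidegree `(t, t)` agree with unitary averages, and applying this to
`|⟨ψ i, ·⟩|^{2t}` and to `‖·‖^{2t}` gives the bound.
-/

open scoped ComplexConjugate

section Preliminaries

theorem integrable_of_continuous {X E : Type*} [TopologicalSpace X] [CompactSpace X]
    [MeasurableSpace X] [OpensMeasurableSpace X] [NormedAddCommGroup E]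
    [SecondCountableTopologyEither X E] {μ : Measure X} [IsFiniteMeasureOnCompacts μ]
    {f : X → E} (hf : Continuous f) : Integrable f μ :=
  hf.integrable_of_hasCompactSupport (.of_compactSpace f)

theorem eq_of_sum_mul_prod_pow_eq {R σ : Type*} [CommRing R] [IsDomain R] [Fintype σ]
    {s : Set R} (hs : s.Infinite) {S : Finset (σ → ℕ)} {a b : (σ → ℕ) → R}
    (h : ∀ y : σ → R, (∀ i, y i ∈ s) →
      ∑ α ∈ S, a α * ∏ i, y i ^ α i = ∑ α ∈ S, b α * ∏ i, y i ^ α i)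
    {α : σ → ℕ} (hα : α ∈ S) : a α = b α := by
  classical
  let e : (σ → ℕ) ≃ (σ →₀ ℕ) := Finsupp.equivFunOnFinite.symm
  let P (c : (σ → ℕ) → R) : MvPolynomial σ R := ∑ α ∈ S, MvPolynomial.monomial (e α) (c α)
  have eval_P (c : (σ → ℕ) → R) (y : σ → R) :
      MvPolynomial.eval y (P c) = ∑ α ∈ S, c α * ∏ i, y i ^ α i := by
    simp [P, e, MvPolynomial.eval_monomial, Finsupp.prod_fintype]
  have coeff_P (c : (σ → ℕ) → R) : MvPolynomial.coeff (e α) (P c) = c α := by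
    simp [P, MvPolynomial.coeff_sum, MvPolynomial.coeff_monomial, hα]
  have hP : P a = P b := MvPolynomial.funext_set (fun _ ↦ s) (fun _ ↦ hs) fun y hy ↦ by
    rw [eval_P, eval_P, h y fun i ↦ hy i (Set.mem_univ i)]
  rw [← coeff_P a, hP, coeff_P]

theorem exists_circle_pow_mul_conj_pow_ne_one {a b : ℕ} (hab : a ≠ b) :
    ∃ ω : Circle, (ω : ℂ) ^ a * conj (ω : ℂ) ^ b ≠ 1 := by
  have hab' : (a : ℝ) - b ≠ 0 := sub_ne_zero.2 (by exact_mod_cast hab)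
  refine ⟨Circle.exp (Real.pi / (a - b)), ?_⟩
  have h : (a : ℂ) * (Real.pi / (a - b) * Complex.I) +
      b * -(Real.pi / (a - b) * Complex.I) = Real.pi * Complex.I := by
    have : (a : ℂ) - b ≠ 0 := by exact_mod_cast hab'
    field_simp
    ring
  rw [← Circle.coe_inv_eq_conj, ← Circle.exp_neg, Circle.coe_exp, Circle.coe_exp,
    ← Complex.exp_nat_mul, ← Complex.exp_nat_mul, ← Complex.exp_add]
  push_cast
  rw [neg_mul, h, Complex.exp_pi_mul_I]
  norm_num

theorem ofReal_sum_norm_sq {𝕜 ι : Type*} [RCLike 𝕜] [Fintype ι] (x : ι → 𝕜) :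
    ((∑ i, ‖x i‖ ^ 2 : ℝ) : 𝕜) = star x ⬝ᵥ x := by
  simp [dotProduct, RCLike.conj_mul]

theorem ofReal_norm_dotProduct_pow_eq_sum_piAntidiag {ι : Type*} [Fintype ι] [DecidableEq ι]
    (x v : ι → ℂ) (t : ℕ) :
    ((‖star x ⬝ᵥ v‖ ^ (2 * t) : ℝ) : ℂ) =
      ∑ α ∈ Finset.piAntidiag Finset.univ t, ∑ β ∈ Finset.piAntidiag Finset.univ t,
        (Nat.multinomial Finset.univ α * Nat.multinomial Finset.univ β *
          ((∏ i, conj (x i) ^ α i) * ∏ i, x i ^ β i) : ℂ) *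
        ((∏ i, v i ^ α i) * ∏ i, conj (v i) ^ β i) := by
  rw [pow_mul, Complex.ofReal_pow, Complex.ofReal_pow, ← Complex.mul_conj', mul_pow, dotProduct,
    map_sum, Finset.sum_pow_eq_sum_piAntidiag, Finset.sum_pow_eq_sum_piAntidiag,
    Finset.sum_mul_sum]
  refine Finset.sum_congr rfl fun α _ ↦ Finset.sum_congr rfl fun β _ ↦ ?_
  simp only [Pi.star_apply, RCLike.star_def, map_mul, Complex.conj_conj, mul_pow,
    Finset.prod_mul_distrib]
  ring

theorem card_piAntidiag_univ (ι : Type*) [Fintype ι] [DecidableEq ι] (t : ℕ) :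
    (Finset.piAntidiag (Finset.univ : Finset ι) t).card = (Fintype.card ι + t - 1).choose t := by
  rw [← Finset.map_sym_eq_piAntidiag, Finset.card_map, Finset.sym_univ, Finset.card_univ,
    Sym.card_sym_eq_choose]

end Preliminaries

section Unitary

variable {𝕜 ι : Type*} [RCLike 𝕜] [Fintype ι] [DecidableEq ι]

theorem isCompact_unitaryGroup : IsCompact (unitaryGroup ι 𝕜 : Set (Matrix ι ι 𝕜)) := by
  have closed : IsClosed (unitaryGroup ι 𝕜 : Set (Matrix ι ι 𝕜)) := isClosed_unitary
  have compact_box : IsCompact (Set.univ.pi fun _ ↦ Set.univ.pi fun _ ↦ Metric.closedBall 0 1 :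
      Set (ι → ι → 𝕜)) :=
    isCompact_univ_pi fun _ ↦ isCompact_univ_pi fun _ ↦ isCompact_closedBall _ _
  refine IsCompact.of_isClosed_subset (X := Matrix ι ι 𝕜) compact_box closed ?_
  intro A hA i _ j _
  exact mem_closedBall_zero_iff.2 (entry_norm_bound_of_unitary hA i j)

instance compactSpace_unitaryGroup : CompactSpace (unitaryGroup ι 𝕜) :=
  isCompact_iff_compactSpace.1 isCompact_unitaryGroup

@[fun_prop]
theorem continuous_unitaryGroup_mulVec_apply (φ : ι → 𝕜) (i : ι) :
    Continuous fun V : unitaryGroup ι 𝕜 ↦ (V.1 *ᵥ φ) i := by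
  have : Continuous fun V : unitaryGroup ι 𝕜 ↦ V.1 *ᵥ φ := by fun_prop
  exact (continuous_apply i).comp this

theorem star_mulVec_dotProduct_mulVec {R : Type*} [CommRing R] [StarRing R]
    (U : unitaryGroup ι R) (x y : ι → R) : star (U.1 *ᵥ x) ⬝ᵥ (U.1 *ᵥ y) = star x ⬝ᵥ y := by
  rw [star_mulVec, ← dotProduct_mulVec, mulVec_mulVec, ← star_eq_conjTranspose,
    UnitaryGroup.star_mul_self, one_mulVec]

theorem sum_norm_sq_mulVec (U : unitaryGroup ι 𝕜) (x : ι → 𝕜) :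
    ∑ i, ‖(U.1 *ᵥ x) i‖ ^ 2 = ∑ i, ‖x i‖ ^ 2 := by
  apply RCLike.ofReal_injective (K := 𝕜)
  rw [ofReal_sum_norm_sq, ofReal_sum_norm_sq, star_mulVec_dotProduct_mulVec]

theorem exists_unitary_mulVec_single_one {x : ι → 𝕜} (hx : ∑ i, ‖x i‖ ^ 2 = 1) (i : ι) :
    ∃ U : unitaryGroup ι 𝕜, U.1 *ᵥ Pi.single i 1 = x := by
  have norm_x : ‖(WithLp.toLp 2 x : EuclideanSpace 𝕜 ι)‖ = 1 := by
    simp [EuclideanSpace.norm_eq, hx]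
  have orthonormal_x :
      Orthonormal 𝕜 (({i} : Set ι).domRestrict fun _ ↦ (WithLp.toLp 2 x : EuclideanSpace 𝕜 ι)) :=
    ⟨fun _ ↦ norm_x, fun j k hjk ↦ absurd (Subsingleton.elim j k) hjk⟩
  obtain ⟨b, hb⟩ := orthonormal_x.exists_orthonormalBasis_extension_of_card_eq (by simp)
  refine ⟨⟨_, (EuclideanSpace.basisFun ι 𝕜).toMatrix_orthonormalBasis_mem_unitary b⟩, ?_⟩
  ext a
  simp [Module.Basis.toMatrix_apply, hb i rfl]

theorem exists_unitary_mulVec_single (x : ι → 𝕜) (i : ι) :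
    ∃ U : unitaryGroup ι 𝕜, U.1 *ᵥ Pi.single i (√(∑ j, ‖x j‖ ^ 2) : 𝕜) = x := by
  set r := √(∑ j, ‖x j‖ ^ 2)
  have hr : r ^ 2 = ∑ j, ‖x j‖ ^ 2 := Real.sq_sqrt (by positivity)
  rcases eq_or_ne r 0 with h | h
  · have hx : x = 0 := by
      ext j
      have := (Finset.sum_eq_zero_iff_of_nonneg fun j _ ↦ by positivity).1
        (hr.symm.trans (by simp [h])) j (Finset.mem_univ j)
      simpa using this
    exact ⟨1, by simp [h, hx]⟩
  · have unit : ∑ j, ‖((r⁻¹ : 𝕜) • x) j‖ ^ 2 = 1 := by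
      simp [mul_pow, ← Finset.mul_sum, ← hr, h]
    obtain ⟨U, hU⟩ := exists_unitary_mulVec_single_one unit i
    refine ⟨U, ?_⟩
    have hs : (Pi.single i (r : 𝕜) : ι → 𝕜) = (r : 𝕜) • Pi.single i 1 := by
      rw [← Pi.single_smul, smul_eq_mul, mul_one]
    rw [hs, mulVec_smul, hU, smul_inv_smul₀ (by exact_mod_cast h)]

/-- The unitary matrix with diagonal `z`. Left multiplication by it changes the phases of the
coordinates of `V *ᵥ φ` independently. -/
def diagonalUnitary (z : ι → Circle) : unitaryGroup ι ℂ :=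
  ⟨diagonal fun i ↦ (z i : ℂ), by
    simp [mem_unitaryGroup_iff', star_eq_conjTranspose, diagonal_conjTranspose,
      diagonal_mul_diagonal, Complex.conj_mul', Circle.norm_coe]⟩

theorem diagonalUnitary_mul_mulVec_apply (z : ι → Circle) (V : unitaryGroup ι ℂ) (φ : ι → ℂ)
    (i : ι) : ((diagonalUnitary z * V).1 *ᵥ φ) i = z i * (V.1 *ᵥ φ) i := by
  rw [UnitaryGroup.mul_val, ← mulVec_mulVec, diagonalUnitary, mulVec_diagonal]

end Unitary

section Moments

variable {ι : Type*} [Fintype ι] [DecidableEq ι] (μ : Measure (unitaryGroup ι ℂ))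

theorem sum_multinomial_mul_integral_prod_norm_pow [IsProbabilityMeasure μ]
    (φ : ι → ℂ) (t : ℕ) :
    ∑ α ∈ Finset.piAntidiag Finset.univ t,
        Nat.multinomial Finset.univ α * ∫ V, ∏ i, ‖(V.1 *ᵥ φ) i‖ ^ (2 * α i) ∂μ =
      (∑ i, ‖φ i‖ ^ 2) ^ t := by
  simp only [← integral_const_mul]
  rw [← integral_finsetSum _ fun α _ ↦ integrable_of_continuous (by fun_prop)]
  simp only [pow_mul, ← Finset.sum_pow_eq_sum_piAntidiag, sum_norm_sq_mulVec, integral_const,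
    probReal_univ, one_smul]

variable [μ.IsMulLeftInvariant]

theorem integral_norm_mulVec_dotProduct_mulVec_pow (φ x : ι → ℂ) (t : ℕ) (U : unitaryGroup ι ℂ) :
    ∫ V, ‖star (U.1 *ᵥ x) ⬝ᵥ (V.1 *ᵥ φ)‖ ^ t ∂μ = ∫ V, ‖star x ⬝ᵥ (V.1 *ᵥ φ)‖ ^ t ∂μ := by
  rw [← integral_mul_left_eq_self _ U]
  simp only [UnitaryGroup.mul_val, ← mulVec_mulVec, star_mulVec_dotProduct_mulVec]

theorem integral_norm_dotProduct_mulVec_pow_eq_mul (φ x : ι → ℂ) (t : ℕ) (i : ι) :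
    ∫ V, ‖star x ⬝ᵥ (V.1 *ᵥ φ)‖ ^ (2 * t) ∂μ =
      (∑ j, ‖x j‖ ^ 2) ^ t * ∫ V, ‖(V.1 *ᵥ φ) i‖ ^ (2 * t) ∂μ := by
  obtain ⟨U, hU⟩ := exists_unitary_mulVec_single x i
  have hr : √(∑ j, ‖x j‖ ^ 2) ^ 2 = ∑ j, ‖x j‖ ^ 2 := Real.sq_sqrt (by positivity)
  conv_lhs => rw [← hU, integral_norm_mulVec_dotProduct_mulVec_pow]
  simp [mul_pow, pow_mul, hr, integral_const_mul]

theorem integral_prod_pow_mul_prod_conj_pow_eq_zero (φ : ι → ℂ) {α β : ι → ℕ} (hαβ : α ≠ β) :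
    ∫ V, (∏ i, (V.1 *ᵥ φ) i ^ α i) * ∏ i, conj ((V.1 *ᵥ φ) i) ^ β i ∂μ = 0 := by
  obtain ⟨i, hi⟩ := Function.ne_iff.1 hαβ
  obtain ⟨ω, hω⟩ := exists_circle_pow_mul_conj_pow_ne_one hi
  set I := ∫ V, (∏ i, (V.1 *ᵥ φ) i ^ α i) * ∏ i, conj ((V.1 *ᵥ φ) i) ^ β i ∂μ with hI
  let z : ι → Circle := Pi.mulSingle i ω
  have prod_z : ∏ j, (z j : ℂ) ^ α j = ω ^ α i := by
    rw [Finset.prod_eq_single i] <;> simp +contextual [z]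
  have prod_conj_z : ∏ j, conj (z j : ℂ) ^ β j = conj (ω : ℂ) ^ β i := by
    rw [Finset.prod_eq_single i] <;> simp +contextual [z]
  have eigen : I = (ω ^ α i * conj (ω : ℂ) ^ β i) * I := by
    conv_lhs => rw [hI, ← integral_mul_left_eq_self _ (diagonalUnitary z)]
    simp only [diagonalUnitary_mul_mulVec_apply, map_mul, mul_pow, Finset.prod_mul_distrib,
      prod_z, prod_conj_z]
    rw [hI, ← integral_const_mul]
    exact integral_congr_ae (.of_forall fun V ↦ mul_mul_mul_comm ..)
  by_contra hI0
  exact hω (mul_right_cancel₀ hI0 (by rw [one_mul, ← eigen]))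

theorem integral_norm_dotProduct_mulVec_pow_eq_sum [IsFiniteMeasure μ] (φ x : ι → ℂ)
    (t : ℕ) :
    ∫ V, ‖star x ⬝ᵥ (V.1 *ᵥ φ)‖ ^ (2 * t) ∂μ =
      ∑ α ∈ Finset.piAntidiag Finset.univ t, (Nat.multinomial Finset.univ α : ℝ) ^ 2 *
        (∫ V, ∏ i, ‖(V.1 *ᵥ φ) i‖ ^ (2 * α i) ∂μ) * ∏ i, ‖x i‖ ^ (2 * α i) := by
  have mul_conj_pow (z : ℂ) (n : ℕ) : z ^ n * conj z ^ n = ((‖z‖ ^ (2 * n) : ℝ) : ℂ) := by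
    rw [← mul_pow, Complex.mul_conj', pow_mul, Complex.ofReal_pow, Complex.ofReal_pow]
  apply Complex.ofReal_injective
  rw [← integral_complex_ofReal]
  simp only [ofReal_norm_dotProduct_pow_eq_sum_piAntidiag]
  rw [integral_finsetSum _ fun α _ ↦ integrable_of_continuous (by fun_prop), Complex.ofReal_sum]
  refine Finset.sum_congr rfl fun α hα ↦ ?_
  rw [integral_finsetSum _ fun β _ ↦ integrable_of_continuous (by fun_prop),
    Finset.sum_eq_single_of_mem α hα fun β _ hβ ↦ by
      rw [integral_const_mul, integral_prod_pow_mul_prod_conj_pow_eq_zero μ φ hβ.symm, mul_zero],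
    integral_const_mul]
  have h_x : (∏ i, conj (x i) ^ α i) * ∏ i, x i ^ α i = ((∏ i, ‖x i‖ ^ (2 * α i) : ℝ) : ℂ) := by
    rw [mul_comm, ← Finset.prod_mul_distrib, Complex.ofReal_prod]
    simp only [mul_conj_pow]
  simp only [h_x, ← Finset.prod_mul_distrib, mul_conj_pow, ← Complex.ofReal_prod,
    integral_complex_ofReal]
  push_cast
  ring

theorem multinomial_mul_integral_prod_norm_pow [IsFiniteMeasure μ] (φ : ι → ℂ) {t : ℕ}
    {α : ι → ℕ} (hα : α ∈ Finset.piAntidiag Finset.univ t) (i : ι) :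
    Nat.multinomial Finset.univ α * ∫ V, ∏ j, ‖(V.1 *ᵥ φ) j‖ ^ (2 * α j) ∂μ =
      ∫ V, ‖(V.1 *ᵥ φ) i‖ ^ (2 * t) ∂μ := by
  set c := ∫ V, ‖(V.1 *ᵥ φ) i‖ ^ (2 * t) ∂μ
  let m (α : ι → ℕ) : ℝ := ∫ V, ∏ j, ‖(V.1 *ᵥ φ) j‖ ^ (2 * α j) ∂μ
  have polynomial_eq (y : ι → ℝ) (hy : ∀ j, y j ∈ Set.Ici 0) :
      ∑ α ∈ Finset.piAntidiag Finset.univ t,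
          (Nat.multinomial Finset.univ α : ℝ) ^ 2 * m α * ∏ j, y j ^ α j =
        ∑ α ∈ Finset.piAntidiag Finset.univ t,
          c * Nat.multinomial Finset.univ α * ∏ j, y j ^ α j := by
    let x (j : ι) : ℂ := √(y j)
    have norm_sq_x (j : ι) : ‖x j‖ ^ 2 = y j := by
      rw [Complex.norm_real, Real.norm_eq_abs, sq_abs, Real.sq_sqrt (hy j)]
    calc
      _ = ∫ V, ‖star x ⬝ᵥ (V.1 *ᵥ φ)‖ ^ (2 * t) ∂μ := by
        rw [integral_norm_dotProduct_mulVec_pow_eq_sum]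
        simp only [m, pow_mul ‖x _‖, norm_sq_x]
      _ = (∑ j, y j) ^ t * c := by
        rw [integral_norm_dotProduct_mulVec_pow_eq_mul μ φ x t i]
        simp only [norm_sq_x, c]
      _ = _ := by
        simp only [Finset.sum_pow_eq_sum_piAntidiag, mul_comm _ c, Finset.mul_sum, mul_assoc]
  have coeff_eq := eq_of_sum_mul_prod_pow_eq (Set.Ici_infinite 0) polynomial_eq hα
  have multinomial_ne_zero : (Nat.multinomial Finset.univ α : ℝ) ≠ 0 := by
    exact_mod_cast (Nat.multinomial_pos _ _).ne'
  refine mul_left_cancel₀ multinomial_ne_zero ?_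
  rw [← mul_assoc, ← sq, coeff_eq, mul_comm]

theorem choose_mul_integral_norm_mulVec_apply_pow [IsProbabilityMeasure μ] (φ : ι → ℂ) (t : ℕ)
    (i : ι) :
    (Fintype.card ι + t - 1).choose t * ∫ V, ‖(V.1 *ᵥ φ) i‖ ^ (2 * t) ∂μ =
      (∑ j, ‖φ j‖ ^ 2) ^ t := by
  rw [← sum_multinomial_mul_integral_prod_norm_pow μ φ t, Finset.sum_congr rfl fun α hα ↦
    multinomial_mul_integral_prod_norm_pow μ φ hα i, Finset.sum_const, card_piAntidiag_univ,
    nsmul_eq_mul]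

theorem integral_norm_dotProduct_mulVec_pow [IsProbabilityMeasure μ] [Nonempty ι] (φ x : ι → ℂ)
    (t : ℕ) :
    ∫ V, ‖star x ⬝ᵥ (V.1 *ᵥ φ)‖ ^ (2 * t) ∂μ =
      (∑ i, ‖x i‖ ^ 2) ^ t * (∑ i, ‖φ i‖ ^ 2) ^ t / (Fintype.card ι + t - 1).choose t := by
  have choose_pos : 0 < (Fintype.card ι + t - 1).choose t :=
    Nat.choose_pos (by have := Fintype.card_pos (α := ι); omega)
  obtain ⟨i⟩ := ‹Nonempty ι›
  rw [integral_norm_dotProduct_mulVec_pow_eq_mul μ φ x t i,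
    ← choose_mul_integral_norm_mulVec_apply_pow μ φ t i]
  field_simp

end Moments

section Design

variable {ι κ : Type*} [Fintype ι] [Fintype κ] {t : ℕ}

/-- The value at `z` of the polynomial of bidegree `(t, t)` in `z` and its conjugate with
coefficients `A`. Monomials are indexed by pairs of `t`-tuples of coordinates, as in the definition
of a design, so different `A` may give the same polynomial. -/
def evalBihomogeneous (A : (Fin t → ι) → (Fin t → ι) → ℂ) (z : ι → ℂ) : ℂ :=
  ∑ p, ∑ q, A p q * ∏ n, z (p n) * conj (z (q n))

theorem ofReal_norm_dotProduct_pow_eq_evalBihomogeneous (x z : ι → ℂ) :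
    ((‖star x ⬝ᵥ z‖ ^ (2 * t) : ℝ) : ℂ) =
      evalBihomogeneous (fun p q : Fin t → ι ↦ ∏ n, conj (x (p n)) * x (q n)) z := by
  rw [pow_mul, Complex.ofReal_pow, Complex.ofReal_pow, ← Complex.mul_conj', mul_pow, dotProduct,
    map_sum, Fintype.sum_pow, Fintype.sum_pow, Finset.sum_mul_sum]
  refine Finset.sum_congr rfl fun p _ ↦ Finset.sum_congr rfl fun q _ ↦ ?_
  simp only [← Finset.prod_mul_distrib, Pi.star_apply, RCLike.star_def, map_mul,
    Complex.conj_conj]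
  exact Finset.prod_congr rfl fun n _ ↦ by ring

theorem ofReal_sum_norm_sq_pow_eq_evalBihomogeneous [DecidableEq ι] (z : ι → ℂ) :
    (((∑ i, ‖z i‖ ^ 2) ^ t : ℝ) : ℂ) =
      evalBihomogeneous (fun p q : Fin t → ι ↦ if p = q then 1 else 0) z := by
  simp [evalBihomogeneous, Fintype.sum_pow, Complex.mul_conj']

variable [DecidableEq ι] {μ : Measure (unitaryGroup ι ℂ)} {ψ₀ : ι → ℂ} {ψ : κ → ι → ℂ}

/-- `ψ` is a complex projective `t`-design relative to the orbit of `ψ₀` under unitaries distributed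
according to `μ`. Vectors of any norm are allowed: scaling `ψ m` gives it a weight, so that weighted
designs are covered. -/
def IsProjectiveDesign (μ : Measure (unitaryGroup ι ℂ)) (ψ₀ : ι → ℂ) (t : ℕ) (ψ : κ → ι → ℂ) :
    Prop :=
  ∀ p q : Fin t → ι,
    (1 / Fintype.card κ : ℂ) * ∑ m, ∏ n, ψ m (p n) * conj (ψ m (q n)) =
      ∫ V, ∏ n, (V.1 *ᵥ ψ₀) (p n) * conj ((V.1 *ᵥ ψ₀) (q n)) ∂μ

namespace IsProjectiveDesign

variable [Nonempty κ]

theorem sum_evalBihomogeneous [IsFiniteMeasure μ] (h : IsProjectiveDesign μ ψ₀ t ψ)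
    (A : (Fin t → ι) → (Fin t → ι) → ℂ) :
    ∑ m, evalBihomogeneous A (ψ m) =
      Fintype.card κ * ∫ V, evalBihomogeneous A (V.1 *ᵥ ψ₀) ∂μ := by
  have card_ne_zero : (Fintype.card κ : ℂ) ≠ 0 := by exact_mod_cast Fintype.card_ne_zero
  simp only [evalBihomogeneous]
  rw [integral_finsetSum _ fun p _ ↦ integrable_of_continuous (by fun_prop), Finset.mul_sum,
    Finset.sum_comm]
  refine Finset.sum_congr rfl fun p _ ↦ ?_
  rw [integral_finsetSum _ fun q _ ↦ integrable_of_continuous (by fun_prop), Finset.mul_sum,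
    Finset.sum_comm]
  refine Finset.sum_congr rfl fun q _ ↦ ?_
  rw [integral_const_mul, ← h p q, ← Finset.mul_sum]
  field_simp

theorem sum_norm_dotProduct_pow [IsFiniteMeasure μ] (h : IsProjectiveDesign μ ψ₀ t ψ)
    (x : ι → ℂ) :
    ∑ m, ‖star x ⬝ᵥ ψ m‖ ^ (2 * t) =
      Fintype.card κ * ∫ V, ‖star x ⬝ᵥ (V.1 *ᵥ ψ₀)‖ ^ (2 * t) ∂μ := by
  apply Complex.ofReal_injective
  rw [Complex.ofReal_sum, Complex.ofReal_mul, Complex.ofReal_natCast, ← integral_complex_ofReal]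
  simp only [ofReal_norm_dotProduct_pow_eq_evalBihomogeneous, h.sum_evalBihomogeneous]

theorem sum_norm_sq_pow [IsProbabilityMeasure μ] (h : IsProjectiveDesign μ ψ₀ t ψ) :
    ∑ m, (∑ i, ‖ψ m i‖ ^ 2) ^ t = Fintype.card κ * (∑ i, ‖ψ₀ i‖ ^ 2) ^ t := by
  have average : ∫ V, (∑ i, ‖(V.1 *ᵥ ψ₀) i‖ ^ 2) ^ t ∂μ = (∑ i, ‖ψ₀ i‖ ^ 2) ^ t := by
    simp only [sum_norm_sq_mulVec, integral_const, probReal_univ, one_smul]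
  rw [← average]
  apply Complex.ofReal_injective
  rw [Complex.ofReal_sum, Complex.ofReal_mul, Complex.ofReal_natCast, ← integral_complex_ofReal]
  simp only [ofReal_sum_norm_sq_pow_eq_evalBihomogeneous, h.sum_evalBihomogeneous]

end IsProjectiveDesign

theorem welch_bound_saturated_of_projective_design_general [μ.IsMulLeftInvariant]
    [IsProbabilityMeasure μ] [Nonempty ι] [Nonempty κ] (h : IsProjectiveDesign μ ψ₀ t ψ) :
    ∑ i, ∑ j, ‖star (ψ i) ⬝ᵥ ψ j‖ ^ (2 * t) =
      (Fintype.card κ * (∑ a, ‖ψ₀ a‖ ^ 2) ^ t) ^ 2 / (Fintype.card ι + t - 1).choose t := by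
  simp only [h.sum_norm_dotProduct_pow, integral_norm_dotProduct_mulVec_pow]
  rw [← Finset.mul_sum, ← Finset.sum_div, ← Finset.sum_mul, h.sum_norm_sq_pow]
  ring

end Design

/-- A complex projective `t`-design saturates the Welch bound. -/
theorem welch_bound_saturated_of_projective_design
    (d t M : ℕ) (hd : 1 ≤ d) (ht : 1 ≤ t) (hM : 1 ≤ M)
    (μ : Measure (Matrix.unitaryGroup (Fin d) ℂ)) [μ.IsHaarMeasure] [IsProbabilityMeasure μ]
    (ψ₀ : Fin d → ℂ) (hψ₀ : ∑ i, ‖ψ₀ i‖ ^ 2 = 1)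
    (ψ : Fin M → (Fin d → ℂ)) (hψ : ∀ m, ∑ i, ‖ψ m i‖ ^ 2 = 1)
    (hdesign : ∀ p q : Fin t → Fin d,
      (1 / M : ℂ) * ∑ m, ∏ n, ψ m (p n) * (starRingEnd ℂ) (ψ m (q n)) =
        ∫ V : Matrix.unitaryGroup (Fin d) ℂ,
          ∏ n, (V : Matrix (Fin d) (Fin d) ℂ).mulVec ψ₀ (p n) *
            (starRingEnd ℂ) ((V : Matrix (Fin d) (Fin d) ℂ).mulVec ψ₀ (q n)) ∂μ) :
    ∑ i, ∑ j, ‖∑ a, (starRingEnd ℂ) (ψ i a) * ψ j a‖ ^ (2 * t) =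
      (M : ℝ) ^ 2 / (Nat.choose (d + t - 1) t) := by
  have : Nonempty (Fin d) := ⟨⟨0, hd⟩⟩
  have : Nonempty (Fin M) := ⟨⟨0, hM⟩⟩
  have h : IsProjectiveDesign μ ψ₀ t ψ := by simpa only [IsProjectiveDesign, Fintype.card_fin]
  simpa [hψ₀, dotProduct] using welch_bound_saturated_of_projective_design_general h
end

section
/- Let d ≥ 1, t ≥ 1, and let (U_m)_{m<M} (M ≥ 1) be any finite family in U(d). Then Σ_{a ∈ Fin d} Σ_{i<M} Σ_{j<M} |(U_i† U_j)_{a,a}|^{2t} ≥ d · M² / C(d+t−1, t). Moreover, if (U_m)_{m<M} is a unitary t-design, then equality holds. -/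
open MeasureTheory Matrix

/-!
The `a`-th diagonal entry of `Uᵢ† Uⱼ` is the inner product of the `a`-th columns of `Uᵢ` and `Uⱼ`.
The Veronese map `x ↦ x ^ ⊗t` into the symmetric power, of dimension `N = C(d + t - 1, t)`, turns
`t`-th powers of inner products into inner products, so the bound is `|tr S|² ≤ N ‖S‖²` for the
frame operator `S = ∑ᵢ vᵢ vᵢ†` of the Veronese vectors `vᵢ`; its Hilbert–Schmidt norm equals that of
their Gram matrix.

For a design, the average over `j` of `|⟨w, Uⱼ eₐ⟩| ^ (2t)` is the Haar average of
`|⟨w, V eₐ⟩| ^ (2t)`, which by invariance is `C ‖w‖ ^ (2t)` for a constant `C`. Translating by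
diagonal unitaries shows that distinct Veronese coordinates of `V eₐ` are orthogonal, so this
average is also a combination of the `|(w ^ ⊗t)ₖ|²` with the second moments of these coordinates as
coefficients. Comparing coefficients, every coordinate has second moment `C`; as their squared
moduli sum to `1`, `C = 1 / N`.
-/

namespace Welch

section FramePotential

variable {𝕜 κ ι : Type*} [RCLike 𝕜] [Fintype κ] [Fintype ι]

lemma star_dotProduct_self_eq_sum (x : κ → 𝕜) :
    star x ⬝ᵥ x = ((∑ k, ‖x k‖ ^ 2 : ℝ) : 𝕜) := by
  simp [dotProduct, RCLike.conj_mul]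

lemma trace_conjTranspose_mul_self_eq_sum (A : Matrix κ ι 𝕜) :
    (Aᴴ * A).trace = ((∑ i, ∑ k, ‖A k i‖ ^ 2 : ℝ) : 𝕜) := by
  simp [Matrix.trace, Matrix.mul_apply, RCLike.conj_mul]

lemma sum_norm_sq_conjTranspose_mul_self (A : Matrix κ ι 𝕜) :
    ∑ i, ∑ j, ‖(Aᴴ * A) i j‖ ^ 2 = ∑ k, ∑ l, ‖(A * Aᴴ) k l‖ ^ 2 := by
  rw [Finset.sum_comm, Finset.sum_comm (f := fun k l => ‖(A * Aᴴ) k l‖ ^ 2)]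
  apply RCLike.ofReal_injective (K := 𝕜)
  rw [← trace_conjTranspose_mul_self_eq_sum, ← trace_conjTranspose_mul_self_eq_sum]
  simp only [conjTranspose_mul, conjTranspose_conjTranspose]
  rw [Matrix.mul_assoc, trace_mul_comm, ← Matrix.mul_assoc, Matrix.mul_assoc]

lemma norm_trace_sq_le_card_mul_sum_norm_sq (S : Matrix κ κ 𝕜) :
    ‖S.trace‖ ^ 2 ≤ Fintype.card κ * ∑ k, ∑ l, ‖S k l‖ ^ 2 := by
  calc ‖S.trace‖ ^ 2 ≤ (∑ k, ‖S k k‖) ^ 2 := by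
        gcongr
        exact norm_sum_le _ _
    _ ≤ Fintype.card κ * ∑ k, ‖S k k‖ ^ 2 := sq_sum_le_card_mul_sum_sq
    _ ≤ Fintype.card κ * ∑ k, ∑ l, ‖S k l‖ ^ 2 := by
        gcongr with k
        exact Finset.single_le_sum (f := fun l => ‖S k l‖ ^ 2)
          (fun _ _ => sq_nonneg _) (Finset.mem_univ k)

theorem norm_sum_dotProduct_self_sq_le (v : ι → κ → 𝕜) :
    ‖∑ i, star (v i) ⬝ᵥ v i‖ ^ 2 ≤
      Fintype.card κ * ∑ i, ∑ j, ‖star (v i) ⬝ᵥ v j‖ ^ 2 := by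
  let A : Matrix κ ι 𝕜 := (Matrix.of v)ᵀ
  calc ‖(Aᴴ * A).trace‖ ^ 2 = ‖(A * Aᴴ).trace‖ ^ 2 := by rw [trace_mul_comm]
    _ ≤ Fintype.card κ * ∑ k, ∑ l, ‖(A * Aᴴ) k l‖ ^ 2 :=
        norm_trace_sq_le_card_mul_sum_norm_sq _
    _ = Fintype.card κ * ∑ i, ∑ j, ‖(Aᴴ * A) i j‖ ^ 2 := by
        rw [sum_norm_sq_conjTranspose_mul_self]

end FramePotential

section Monomials

variable {n R : Type*}

/-- The monomial with exponent multiset `k`, as a multiplicative function of its variables. -/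
def monomialHom [CommMonoid R] (k : Multiset n) : (n → R) →* R where
  toFun x := (k.map x).prod
  map_one' := by simp
  map_mul' _ _ := Multiset.prod_map_mul

lemma monomialHom_mulSingle [CommMonoid R] [DecidableEq n] (k : Multiset n) (p : n) (z : R) :
    monomialHom k (Pi.mulSingle p z) = z ^ k.count p := by
  calc (k.map (Pi.mulSingle p z)).prod = (Pi.mulSingle p z : n → R) p ^ k.count p :=
        Multiset.prod_map_eq_pow_single p fun q hq _ => Pi.mulSingle_eq_of_ne hq _
    _ = z ^ k.count p := by rw [Pi.mulSingle_eq_same]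

lemma star_monomialHom [CommMonoid R] [StarMul R] (k : Multiset n) (x : n → R) :
    star (monomialHom k x) = monomialHom k (star x) :=
  (map_multiset_prod (starMulAut : MulAut R) _).trans (by rw [Multiset.map_map]; rfl)

lemma norm_monomialHom {𝕜 : Type*} [NormedField 𝕜] (k : Multiset n) (x : n → 𝕜) :
    ‖monomialHom k x‖ = monomialHom k fun p => ‖x p‖ :=
  (map_multiset_prod (normHom : 𝕜 →*₀ ℝ) _).trans (by rw [Multiset.map_map]; rfl)

lemma linearIndependent_monomialHom_sq [CommRing R] [IsDomain R] [CharZero R] :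
    LinearIndependent R fun (k : Multiset n) (x : n → R) => monomialHom k x ^ 2 := by
  classical
  let φ (k : Multiset n) : (n → R) →* R := (powMonoidHom 2).comp (monomialHom k)
  have φ_injective : Function.Injective φ := by
    intro k l hkl
    ext p
    have h : ((2 : R) ^ k.count p) ^ 2 = (2 ^ l.count p) ^ 2 := by
      simpa [φ, monomialHom_mulSingle] using DFunLike.congr_fun hkl (Pi.mulSingle p 2)
    rw [← pow_mul, ← pow_mul] at h
    have := Nat.pow_right_injective le_rfl (by exact_mod_cast h)
    omega
  exact (linearIndependent_monoidHom (n → R) R).comp φ φ_injective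

lemma exists_norm_eq_one_monomialHom_ne {k l : Multiset n} (hkl : k ≠ l) :
    ∃ z : n → ℂ, (∀ p, ‖z p‖ = 1) ∧ monomialHom k z ≠ monomialHom l z := by
  classical
  obtain ⟨p, hp⟩ : ∃ p, k.count p ≠ l.count p := by
    by_contra! h
    exact hkl (Multiset.ext.mpr h)
  let N := max (k.count p) (l.count p) + 1
  have hN : N ≠ 0 := Nat.succ_ne_zero _
  obtain ⟨ζ, hζ⟩ : ∃ ζ : ℂ, IsPrimitiveRoot ζ N := ⟨_, Complex.isPrimitiveRoot_exp N hN⟩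
  refine ⟨Pi.mulSingle p ζ, fun q => ?_, ?_⟩
  · rcases eq_or_ne q p with rfl | hq
    · simpa using hζ.norm'_eq_one hN
    · simp [hq]
  · rw [monomialHom_mulSingle, monomialHom_mulSingle]
    exact fun h => hp (hζ.pow_inj (by omega) (by omega) h)

end Monomials

section Veronese

variable {𝕜 n : Type*} [RCLike 𝕜] [DecidableEq n] {t : ℕ}

/-- The Veronese embedding, i.e. `x ↦ x ^ ⊗t` in the orthonormal basis of the symmetric power
indexed by multisets of size `t`; the square roots of the multinomial coefficients make it
multiplicative for inner products. -/
noncomputable def veronese (t : ℕ) (x : n → 𝕜) (k : Sym n t) : 𝕜 :=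
  (√(k : Multiset n).countPerms : ℝ) * monomialHom (k : Multiset n) x

lemma veronese_mul (z x : n → 𝕜) (k : Sym n t) :
    veronese t (z * x) k = monomialHom (k : Multiset n) z * veronese t x k := by
  rw [veronese, veronese, map_mul, mul_left_comm]

lemma star_veronese_mul_veronese (w x : n → 𝕜) (k : Sym n t) :
    star (veronese t w k) * veronese t x k =
      (k : Multiset n).countPerms * monomialHom (k : Multiset n) (star w * x) := by
  have hsqrt : ((√(k : Multiset n).countPerms : ℝ) : 𝕜) * (√(k : Multiset n).countPerms : ℝ) =
      (k : Multiset n).countPerms := by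
    rw [← RCLike.ofReal_mul, Real.mul_self_sqrt (Nat.cast_nonneg _), RCLike.ofReal_natCast]
  rw [veronese, veronese, star_mul', RCLike.star_def, RCLike.conj_ofReal, ← RCLike.star_def,
    star_monomialHom, mul_mul_mul_comm, hsqrt, map_mul]

lemma norm_veronese_sq (x : n → 𝕜) (k : Sym n t) :
    ‖veronese t x k‖ ^ 2 =
      (k : Multiset n).countPerms * monomialHom (k : Multiset n) (fun p => ‖x p‖) ^ 2 := by
  rw [veronese, norm_mul, mul_pow, norm_monomialHom, RCLike.norm_ofReal, sq_abs,
    Real.sq_sqrt (Nat.cast_nonneg _)]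

lemma continuous_veronese (k : Sym n t) : Continuous fun x : n → 𝕜 => veronese t x k :=
  continuous_const.mul (continuous_multiset_prod _ fun p _ => continuous_apply p)

variable [Fintype n]

lemma star_veronese_dotProduct_veronese (w x : n → 𝕜) :
    star (veronese t w) ⬝ᵥ veronese t x = (star w ⬝ᵥ x) ^ t := by
  rw [dotProduct, dotProduct, Finset.sum_pow, Finset.sym_univ]
  exact Finset.sum_congr rfl fun k _ => star_veronese_mul_veronese w x k

lemma sum_norm_veronese_sq (x : n → 𝕜) :
    ∑ k, ‖veronese t x k‖ ^ 2 = (∑ p, ‖x p‖ ^ 2) ^ t := by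
  have h := star_veronese_dotProduct_veronese (t := t) x x
  rw [star_dotProduct_self_eq_sum, star_dotProduct_self_eq_sum] at h
  exact_mod_cast h

lemma eq_zero_of_sum_mul_norm_veronese_sq_eq_zero {e : Sym n t → ℝ}
    (he : ∀ w : n → 𝕜, ∑ k, e k * ‖veronese t w k‖ ^ 2 = 0) (k : Sym n t) : e k = 0 := by
  have hsum : ∑ k : Sym n t, (e k * (k : Multiset n).countPerms) •
      (fun r : n → ℝ => monomialHom (k : Multiset n) r ^ 2) = 0 := by
    ext r
    simpa [norm_veronese_sq, ← map_pow, Pi.pow_def, ← mul_assoc] using he fun p => r p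
  have hindep : LinearIndependent ℝ fun (k : Sym n t) (r : n → ℝ) =>
      monomialHom (k : Multiset n) r ^ 2 :=
    linearIndependent_monomialHom_sq.comp _ Subtype.coe_injective
  have hcoeff : e k * (k : Multiset n).countPerms = 0 :=
    Fintype.linearIndependent_iff.mp hindep _ hsum k
  have hcount : ((k : Multiset n).countPerms : ℝ) ≠ 0 := by
    exact_mod_cast (Nat.multinomial_pos _ _).ne'
  exact (mul_eq_zero.mp hcoeff).resolve_right hcount

end Veronese

theorem norm_sum_dotProduct_self_pow_sq_le {𝕜 n ι : Type*} [RCLike 𝕜] [Fintype n] [Fintype ι]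
    (t : ℕ) (v : ι → n → 𝕜) :
    ‖∑ i, (star (v i) ⬝ᵥ v i) ^ t‖ ^ 2 ≤
      (Fintype.card n + t - 1).choose t * ∑ i, ∑ j, ‖star (v i) ⬝ᵥ v j‖ ^ (2 * t) := by
  classical
  simpa only [star_veronese_dotProduct_veronese, Sym.card_sym_eq_choose, norm_pow, ← pow_mul,
    mul_comm t 2] using norm_sum_dotProduct_self_sq_le fun i => veronese t (v i)

lemma choose_card_add_sub_one_pos (n : Type*) [Fintype n] [Nonempty n] (t : ℕ) :
    0 < (Fintype.card n + t - 1).choose t :=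
  Nat.choose_pos (by have := Fintype.card_pos (α := n); omega)

theorem card_sq_div_choose_le_sum_norm_dotProduct_pow {𝕜 n ι : Type*} [RCLike 𝕜] [Fintype n]
    [Nonempty n] [Fintype ι] (t : ℕ) {v : ι → n → 𝕜} (hv : ∀ i, star (v i) ⬝ᵥ v i = 1) :
    (Fintype.card ι : ℝ) ^ 2 / (Fintype.card n + t - 1).choose t ≤
      ∑ i, ∑ j, ‖star (v i) ⬝ᵥ v j‖ ^ (2 * t) := by
  rw [div_le_iff₀' (by exact_mod_cast choose_card_add_sub_one_pos n t)]
  simpa [hv] using norm_sum_dotProduct_self_pow_sq_le t v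

section RandomVectors

variable {Ω 𝕜 : Type*} [MeasurableSpace Ω] {μ : Measure Ω} [RCLike 𝕜]

lemma integral_norm_dotProduct_sq_of_orthogonal {κ : Type*} [Fintype κ] {X : Ω → κ → 𝕜}
    (hint : ∀ k l, Integrable (fun ω => X ω k * star (X ω l)) μ)
    (horth : ∀ k l, k ≠ l → ∫ ω, X ω k * star (X ω l) ∂μ = 0) (c : κ → 𝕜) :
    ∫ ω, ‖c ⬝ᵥ X ω‖ ^ 2 ∂μ = ∑ k, ‖c k‖ ^ 2 * ∫ ω, ‖X ω k‖ ^ 2 ∂μ := by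
  have hexpand (ω) : ((‖c ⬝ᵥ X ω‖ ^ 2 : ℝ) : 𝕜) =
      ∑ k, ∑ l, c k * star (c l) * (X ω k * star (X ω l)) := by
    rw [RCLike.ofReal_pow, ← RCLike.mul_conj, dotProduct, map_sum, Finset.sum_mul_sum]
    simp only [map_mul, RCLike.star_def, mul_mul_mul_comm]
  apply RCLike.ofReal_injective (K := 𝕜)
  rw [← integral_ofReal]
  simp only [hexpand]
  rw [integral_finsetSum _ fun k _ => integrable_finsetSum _ fun l _ => (hint k l).const_mul _]
  push_cast
  refine Finset.sum_congr rfl fun k _ => ?_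
  rw [integral_finsetSum _ fun l _ => (hint k l).const_mul _,
    Finset.sum_eq_single_of_mem k (Finset.mem_univ k) fun l _ hl => by
      rw [integral_const_mul, horth k l hl.symm, mul_zero],
    integral_const_mul]
  simp only [RCLike.star_def, RCLike.mul_conj, ← RCLike.ofReal_pow, integral_ofReal]

/-- The uniform distribution on the finite family `x` has the same moments of bidegree `(t, t)`
as the random vector `X`. For `X` uniform on the complex unit sphere and unit vectors `x m`, this
says that `x` is a complex projective `t`-design. -/
def MatchesMoments {n ι : Type*} [Fintype ι] (t : ℕ) (x : ι → n → 𝕜) (X : Ω → n → 𝕜)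
    (μ : Measure Ω) : Prop :=
  ∀ p r : Fin t → n,
    (1 / Fintype.card ι : 𝕜) * ∑ m, ∏ s, x m (p s) * starRingEnd 𝕜 (x m (r s)) =
      ∫ ω, ∏ s, X ω (p s) * starRingEnd 𝕜 (X ω (r s)) ∂μ

variable {n ι : Type*} [Fintype n] [Fintype ι]

lemma norm_star_dotProduct_pow_eq_sum (t : ℕ) (w x : n → 𝕜) :
    ((‖star w ⬝ᵥ x‖ ^ (2 * t) : ℝ) : 𝕜) = ∑ g : Fin t → n × n,
      (∏ s, star (w (g s).1) * w (g s).2) * ∏ s, x (g s).1 * starRingEnd 𝕜 (x (g s).2) := by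
  rw [pow_mul, RCLike.ofReal_pow, RCLike.ofReal_pow, ← RCLike.mul_conj, dotProduct, map_sum,
    Finset.sum_mul_sum, ← Fintype.sum_prod_type', Fintype.sum_pow]
  refine Finset.sum_congr rfl fun g _ => ?_
  rw [← Finset.prod_mul_distrib]
  refine Finset.prod_congr rfl fun s _ => ?_
  simp only [Pi.star_apply, RCLike.star_def, map_mul, RCLike.conj_conj]
  ring

lemma MatchesMoments.average_norm_dotProduct_pow {t : ℕ} {x : ι → n → 𝕜} {X : Ω → n → 𝕜}
    (h : MatchesMoments t x X μ)
    (hint : ∀ p r : Fin t → n,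
      Integrable (fun ω => ∏ s, X ω (p s) * starRingEnd 𝕜 (X ω (r s))) μ) (w : n → 𝕜) :
    1 / Fintype.card ι * ∑ m, ‖star w ⬝ᵥ x m‖ ^ (2 * t) =
      ∫ ω, ‖star w ⬝ᵥ X ω‖ ^ (2 * t) ∂μ := by
  apply RCLike.ofReal_injective (K := 𝕜)
  rw [← integral_ofReal]
  simp only [RCLike.ofReal_mul, RCLike.ofReal_sum, RCLike.ofReal_div,
    norm_star_dotProduct_pow_eq_sum]
  rw [integral_finsetSum _ fun g _ => (hint _ _).const_mul _, Finset.sum_comm, Finset.mul_sum]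
  refine Finset.sum_congr rfl fun g _ => ?_
  rw [integral_const_mul, ← h, ← Finset.mul_sum]
  simp only [map_one, map_natCast, one_div, RCLike.star_def]
  ring

end RandomVectors

section UnitaryColumns

variable {n 𝕜 : Type*} [Fintype n] [RCLike 𝕜]

lemma star_col_dotProduct_col (A B : Matrix n n 𝕜) (a : n) :
    star (A.col a) ⬝ᵥ B.col a = (Aᴴ * B) a a := rfl

variable [DecidableEq n]

instance compactSpace_unitaryGroup : CompactSpace (unitaryGroup n 𝕜) := by
  apply isCompact_iff_compactSpace.mp
  refine (isCompact_univ_pi fun _ => isCompact_univ_pi fun _ =>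
    isCompact_closedBall (0 : 𝕜) 1).of_isClosed_subset
      (isClosed_unitary (R := Matrix n n 𝕜)) fun V hV p _ q _ => ?_
  simpa using entry_norm_bound_of_unitary hV p q

lemma star_col_dotProduct_col_self (V : unitaryGroup n 𝕜) (a : n) :
    star (V.1.col a) ⬝ᵥ V.1.col a = 1 := by
  rw [star_col_dotProduct_col, ← star_eq_conjTranspose, UnitaryGroup.star_mul_self, one_apply_eq]

lemma sum_norm_col_sq (V : unitaryGroup n 𝕜) (a : n) :
    ∑ p, ‖V.1.col a p‖ ^ 2 = 1 := by
  have h := star_col_dotProduct_col_self V a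
  rw [star_dotProduct_self_eq_sum] at h
  exact_mod_cast h

lemma diagonal_mem_unitaryGroup {z : n → 𝕜} (hz : ∀ p, ‖z p‖ = 1) :
    diagonal z ∈ unitaryGroup n 𝕜 := by
  rw [mem_unitaryGroup_iff, star_eq_conjTranspose, diagonal_conjTranspose,
    diagonal_mul_diagonal, ← diagonal_one]
  simp [RCLike.mul_conj, hz]

lemma exists_unitaryGroup_col_eq (a : n) {w : n → 𝕜}
    (hw : ∑ p, ‖w p‖ ^ 2 = 1) : ∃ W : unitaryGroup n 𝕜, W.1.col a = w := by
  have hnorm : ‖WithLp.toLp 2 w‖ = 1 := by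
    simp [EuclideanSpace.norm_eq, hw]
  have horth : Orthonormal 𝕜 (({a} : Set n).domRestrict fun _ => WithLp.toLp 2 w) :=
    ⟨fun _ => hnorm, fun i j hij => absurd (Subsingleton.elim i j) hij⟩
  obtain ⟨b, hb⟩ := horth.exists_orthonormalBasis_extension_of_card_eq (by simp)
  refine ⟨⟨_, (EuclideanSpace.basisFun n 𝕜).toMatrix_orthonormalBasis_mem_unitary b⟩, ?_⟩
  ext p
  simp [Module.Basis.toMatrix_apply, hb a rfl]

lemma exists_unitaryGroup_eq_smul_col (a : n) (w : n → 𝕜) :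
    ∃ (c : ℝ) (W : unitaryGroup n 𝕜), c ^ 2 = ∑ p, ‖w p‖ ^ 2 ∧ w = (c : 𝕜) • W.1.col a := by
  set S := ∑ p, ‖w p‖ ^ 2 with hS
  have hS_nonneg : 0 ≤ S := Finset.sum_nonneg fun _ _ => sq_nonneg _
  rcases eq_or_ne S 0 with h0 | h0
  · refine ⟨0, 1, by simp [h0], funext fun p => ?_⟩
    have := (Finset.sum_eq_zero_iff_of_nonneg fun _ _ => sq_nonneg _).mp h0 p (Finset.mem_univ p)
    simpa using this
  · have hsqrt : √S ≠ 0 := (Real.sqrt_pos.mpr (hS_nonneg.lt_of_ne' h0)).ne'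
    obtain ⟨W, hW⟩ := exists_unitaryGroup_col_eq a (w := ((√S : ℝ) : 𝕜)⁻¹ • w) (by
      simp [mul_pow, ← Finset.mul_sum, Real.sq_sqrt hS_nonneg, ← hS, h0])
    refine ⟨√S, W, Real.sq_sqrt hS_nonneg, ?_⟩
    rw [hW, smul_inv_smul₀ (by exact_mod_cast hsqrt)]

end UnitaryColumns

section HaarMoments

variable {n : Type*} [Fintype n] [DecidableEq n] {t : ℕ}
  (μ : Measure (unitaryGroup n ℂ))

lemma integral_veronese_col_mul_star_eq_zero [μ.IsMulLeftInvariant] (a : n) {k l : Sym n t}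
    (hkl : k ≠ l) :
    ∫ V : unitaryGroup n ℂ,
      veronese t (V.1.col a) k * star (veronese t (V.1.col a) l) ∂μ = 0 := by
  obtain ⟨z, hz, hne⟩ := exists_norm_eq_one_monomialHom_ne (Subtype.coe_injective.ne hkl)
  let D : unitaryGroup n ℂ := ⟨diagonal z, diagonal_mem_unitaryGroup hz⟩
  let c : ℂ := monomialHom (k : Multiset n) z * star (monomialHom (l : Multiset n) z)
  have hc : c ≠ 1 := fun h => hne <| by
    have hl : star (monomialHom (l : Multiset n) z) * monomialHom (l : Multiset n) z = 1 := by
      rw [RCLike.star_def, RCLike.conj_mul, norm_monomialHom]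
      simp [hz, ← Pi.one_def]
    exact mul_right_cancel₀ (left_ne_zero_of_mul_eq_one hl) (h.trans ((mul_comm _ _).trans hl).symm)
  have hcol (V : unitaryGroup n ℂ) : (D * V).1.col a = z * V.1.col a :=
    funext fun p => diagonal_mul z V.1 p a
  have hinv := integral_mul_left_eq_self (μ := μ) (fun V : unitaryGroup n ℂ =>
    veronese t (V.1.col a) k * star (veronese t (V.1.col a) l)) D
  simp only [hcol, veronese_mul, star_mul', mul_mul_mul_comm _ (veronese _ _ _),
    integral_const_mul] at hinv
  by_contra hne_zero
  exact hc ((mul_eq_right₀ hne_zero).mp hinv)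

lemma integral_norm_dotProduct_col_pow_eq_mul [μ.IsMulLeftInvariant] (t : ℕ) (a : n)
    (w : n → ℂ) :
    ∫ V : unitaryGroup n ℂ, ‖star w ⬝ᵥ V.1.col a‖ ^ (2 * t) ∂μ =
      (∑ p, ‖w p‖ ^ 2) ^ t * ∫ V : unitaryGroup n ℂ, ‖V.1 a a‖ ^ (2 * t) ∂μ := by
  obtain ⟨c, W, hc, rfl⟩ := exists_unitaryGroup_eq_smul_col a w
  rw [← hc, ← integral_mul_left_eq_self (μ := μ) (fun V => ‖V.1 a a‖ ^ (2 * t)) W⁻¹,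
    ← integral_const_mul]
  refine integral_congr_ae (.of_forall fun V => ?_)
  change ‖star ((c : ℂ) • W.1.col a) ⬝ᵥ V.1.col a‖ ^ (2 * t) =
    (c ^ 2) ^ t * ‖star (W.1.col a) ⬝ᵥ V.1.col a‖ ^ (2 * t)
  simp [mul_pow, pow_mul]

section FiniteMeasure

variable [IsFiniteMeasureOnCompacts μ]

lemma integrable_of_continuous_unitaryGroup {E : Type*} [NormedAddCommGroup E]
    {f : unitaryGroup n ℂ → E} (hf : Continuous f) : Integrable f μ :=
  hf.integrable_of_hasCompactSupport (.of_compactSpace f)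

lemma continuous_veronese_col (a : n) (k : Sym n t) :
    Continuous fun V : unitaryGroup n ℂ => veronese t (V.1.col a) k :=
  (continuous_veronese k).comp
    (continuous_pi fun p => continuous_subtype_val.matrix_elem p a)

variable [μ.IsMulLeftInvariant]

lemma sum_norm_veronese_sq_mul_integral (a : n) (w : n → ℂ) :
    ∑ k, ‖veronese t w k‖ ^ 2 * ∫ V : unitaryGroup n ℂ, ‖veronese t (V.1.col a) k‖ ^ 2 ∂μ =
      (∑ k, ‖veronese t w k‖ ^ 2) * ∫ V : unitaryGroup n ℂ, ‖V.1 a a‖ ^ (2 * t) ∂μ := by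
  have hpythagoras := integral_norm_dotProduct_sq_of_orthogonal
    (X := fun V : unitaryGroup n ℂ => veronese t (V.1.col a))
    (fun k l => integrable_of_continuous_unitaryGroup μ
      ((continuous_veronese_col a k).mul (continuous_veronese_col a l).star))
    (fun k l => integral_veronese_col_mul_star_eq_zero μ a) (star (veronese t w))
  simp only [Pi.star_apply, norm_star] at hpythagoras
  rw [← hpythagoras, sum_norm_veronese_sq, ← integral_norm_dotProduct_col_pow_eq_mul]
  simp only [star_veronese_dotProduct_veronese, norm_pow, ← pow_mul, mul_comm t 2]

lemma integral_norm_veronese_col_sq (a : n) (k : Sym n t) :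
    ∫ V : unitaryGroup n ℂ, ‖veronese t (V.1.col a) k‖ ^ 2 ∂μ =
      ∫ V : unitaryGroup n ℂ, ‖V.1 a a‖ ^ (2 * t) ∂μ := by
  refine sub_eq_zero.mp (eq_zero_of_sum_mul_norm_veronese_sq_eq_zero (𝕜 := ℂ)
    (e := fun k => ∫ V : unitaryGroup n ℂ, ‖veronese t (V.1.col a) k‖ ^ 2 ∂μ -
      ∫ V : unitaryGroup n ℂ, ‖V.1 a a‖ ^ (2 * t) ∂μ) (fun w => ?_) k)
  simp only [sub_mul, Finset.sum_sub_distrib]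
  rw [sub_eq_zero, ← Finset.mul_sum, mul_comm _ (∑ k, _), ← sum_norm_veronese_sq_mul_integral]
  simp only [mul_comm]

end FiniteMeasure

variable [μ.IsMulLeftInvariant] [IsProbabilityMeasure μ]

theorem integral_norm_unitaryGroup_apply_pow (t : ℕ) (a : n) :
    ∫ V : unitaryGroup n ℂ, ‖V.1 a a‖ ^ (2 * t) ∂μ =
      1 / (Fintype.card n + t - 1).choose t := by
  have htotal : ∑ k : Sym n t, ∫ V : unitaryGroup n ℂ, ‖veronese t (V.1.col a) k‖ ^ 2 ∂μ = 1 := by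
    rw [← integral_finsetSum _ fun k _ => integrable_of_continuous_unitaryGroup μ
      ((continuous_veronese_col a k).norm.fun_pow 2)]
    simp only [sum_norm_veronese_sq, sum_norm_col_sq, one_pow, integral_const, probReal_univ,
      one_smul]
  simp only [integral_norm_veronese_col_sq, Finset.sum_const, Finset.card_univ,
    Sym.card_sym_eq_choose, nsmul_eq_mul] at htotal
  exact eq_one_div_of_mul_eq_one_right htotal

variable {μ}

lemma MatchesMoments.sum_norm_dotProduct_pow_eq {ι : Type*} [Fintype ι] [Nonempty ι] {a : n}
    {x : ι → n → ℂ} (h : MatchesMoments t x (fun V : unitaryGroup n ℂ => V.1.col a) μ)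
    (w : n → ℂ) :
    ∑ m, ‖star w ⬝ᵥ x m‖ ^ (2 * t) =
      Fintype.card ι * (∑ p, ‖w p‖ ^ 2) ^ t / (Fintype.card n + t - 1).choose t := by
  have hcont (p : n) : Continuous fun V : unitaryGroup n ℂ => V.1.col a p :=
    continuous_subtype_val.matrix_elem p a
  have haverage := h.average_norm_dotProduct_pow
    (fun p r => integrable_of_continuous_unitaryGroup _ (by fun_prop)) w
  rw [integral_norm_dotProduct_col_pow_eq_mul, integral_norm_unitaryGroup_apply_pow] at haverage
  have hcard : (Fintype.card ι : ℝ) ≠ 0 := by exact_mod_cast Fintype.card_ne_zero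
  field_simp at haverage ⊢
  linear_combination haverage

theorem MatchesMoments.sum_sum_norm_dotProduct_pow_eq {ι : Type*} [Fintype ι] [Nonempty ι]
    {a : n} {x : ι → n → ℂ}
    (h : MatchesMoments t x (fun V : unitaryGroup n ℂ => V.1.col a) μ)
    (hx : ∀ i, ∑ p, ‖x i p‖ ^ 2 = 1) :
    ∑ i, ∑ j, ‖star (x i) ⬝ᵥ x j‖ ^ (2 * t) =
      (Fintype.card ι : ℝ) ^ 2 / (Fintype.card n + t - 1).choose t := by
  simp only [h.sum_norm_dotProduct_pow_eq, hx, one_pow, mul_one, Finset.sum_const,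
    Finset.card_univ, nsmul_eq_mul]
  ring

end HaarMoments

end Welch

open Welch in
theorem unitary_welch_bound_general {n ι : Type*} [Fintype n] [DecidableEq n] [Nonempty n]
    [Fintype ι] [Nonempty ι] (t : ℕ) (μ : Measure (Matrix.unitaryGroup n ℂ))
    [μ.IsMulLeftInvariant] [IsProbabilityMeasure μ] (U : ι → Matrix.unitaryGroup n ℂ) :
    ((Fintype.card n : ℝ) * Fintype.card ι ^ 2 / (Fintype.card n + t - 1).choose t ≤
      ∑ a, ∑ i, ∑ j, ‖((U i).1ᴴ * (U j).1) a a‖ ^ (2 * t)) ∧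
    ((∀ a, MatchesMoments t (fun m => (U m).1.col a)
        (fun V : Matrix.unitaryGroup n ℂ => V.1.col a) μ) →
      ∑ a, ∑ i, ∑ j, ‖((U i).1ᴴ * (U j).1) a a‖ ^ (2 * t) =
        (Fintype.card n : ℝ) * Fintype.card ι ^ 2 / (Fintype.card n + t - 1).choose t) := by
  have hsum : (Fintype.card n : ℝ) * Fintype.card ι ^ 2 / (Fintype.card n + t - 1).choose t =
      ∑ _a : n, (Fintype.card ι : ℝ) ^ 2 / (Fintype.card n + t - 1).choose t := by
    rw [Finset.sum_const, Finset.card_univ, nsmul_eq_mul, mul_div_assoc]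
  simp only [hsum, ← star_col_dotProduct_col]
  exact ⟨Finset.sum_le_sum fun a _ => card_sq_div_choose_le_sum_norm_dotProduct_pow t fun i =>
      star_col_dotProduct_col_self (U i) a,
    fun h => Finset.sum_congr rfl fun a _ => (h a).sum_sum_norm_dotProduct_pow_eq fun i =>
      sum_norm_col_sq (U i) a⟩

/-- Welch-type bound for families of unitaries, with equality for
unitary `t`-designs. -/
theorem unitary_welch_bound
    (d t M : ℕ) (hd : 1 ≤ d) (ht : 1 ≤ t) (hM : 1 ≤ M)
    (μ : Measure (Matrix.unitaryGroup (Fin d) ℂ)) [μ.IsHaarMeasure] [IsProbabilityMeasure μ]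
    (U : Fin M → Matrix.unitaryGroup (Fin d) ℂ) :
    ((d : ℝ) * M ^ 2 / (Nat.choose (d + t - 1) t) ≤
      ∑ a : Fin d, ∑ i, ∑ j,
        ‖((U i : Matrix (Fin d) (Fin d) ℂ)ᴴ * (U j : Matrix (Fin d) (Fin d) ℂ)) a a‖
          ^ (2 * t)) ∧
    ((∀ p q r s : Fin t → Fin d,
        (1 / M : ℂ) * ∑ m, ∏ n, U m (p n) (q n) * (starRingEnd ℂ) (U m (r n) (s n)) =
          ∫ V : Matrix.unitaryGroup (Fin d) ℂ,
            ∏ n, V (p n) (q n) * (starRingEnd ℂ) (V (r n) (s n)) ∂μ) →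
      ∑ a : Fin d, ∑ i, ∑ j,
        ‖((U i : Matrix (Fin d) (Fin d) ℂ)ᴴ * (U j : Matrix (Fin d) (Fin d) ℂ)) a a‖
          ^ (2 * t) =
        (d : ℝ) * M ^ 2 / (Nat.choose (d + t - 1) t)) := by
  have : NeZero d := ⟨Nat.one_le_iff_ne_zero.mp hd⟩
  have : NeZero M := ⟨Nat.one_le_iff_ne_zero.mp hM⟩
  have hgeneral := unitary_welch_bound_general t μ U
  rw [Fintype.card_fin, Fintype.card_fin] at hgeneral
  exact ⟨hgeneral.1, fun h => hgeneral.2 fun a p r => by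
    simpa using h p (fun _ => a) r fun _ => a⟩
end

section
/- Let μ be a probability measure on ℝ^m = (Fin m → ℝ) such that every real polynomial function in m variables is μ-integrable, let t ≥ 0, and let (x_i)_{i<M} (M ≥ 1) be a t-design for μ, i.e. for every f ∈ MvPolynomial (Fin m) ℝ with totalDegree f ≤ t one has (1/M) Σ_{i<M} f(x_i) = ∫ f dμ. Let T : (Fin m → ℝ) → (Fin n → ℝ) be an affine map, T(x) = g(x) + c with g ℝ-linear and c ∈ ℝ^n. Then (T(x_i))_{i<M} is a t-design for the pushforward measure μ.map T: for every h ∈ MvPolynomial (Fin n) ℝ with totalDegree h ≤ t, (1/M) Σ_{i<M} h(T(x_i)) = ∫ h d(μ.map T). -/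
open MeasureTheory

/-!
Composing a polynomial of degree at most `t` with a polynomial map whose coordinates have degree at
most `d` yields a polynomial of degree at most `t * d`. Hence, by the change of variables formula,
such a map carries a cubature rule of degree `t * d` to one of degree `t` for the pushforward
measure; affine maps are the case `d = 1`.
-/

section Polynomial

variable {R σ τ : Type*} [CommSemiring R]

open MvPolynomial

theorem eval_bind₁ (z : σ → R) (p : τ → MvPolynomial σ R) (h : MvPolynomial τ R) :
    eval z (bind₁ p h) = eval (fun j => eval z (p j)) h :=
  eval₂Hom_bind₁ _ _ _ _

theorem measurable_eval [MeasurableSpace R] [MeasurableAdd₂ R] [MeasurableMul₂ R]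
    (f : MvPolynomial σ R) : Measurable fun z => eval z f := by
  simp only [eval_eq]
  fun_prop

theorem totalDegree_bind₁_le {p : τ → MvPolynomial σ R} {d : ℕ}
    (hp : ∀ j, (p j).totalDegree ≤ d) (h : MvPolynomial τ R) :
    (bind₁ p h).totalDegree ≤ h.totalDegree * d := by
  rw [← aeval_eq_bind₁, aeval_def, eval₂_eq]
  refine totalDegree_finsetSum_le fun e he => ?_
  calc (algebraMap R (MvPolynomial σ R) (h.coeff e) * ∏ j ∈ e.support, p j ^ e j).totalDegree
      ≤ (∏ j ∈ e.support, p j ^ e j).totalDegree := by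
        simpa [algebraMap_eq] using totalDegree_mul (C (h.coeff e)) (∏ j ∈ e.support, p j ^ e j)
    _ ≤ ∑ j ∈ e.support, (p j ^ e j).totalDegree := totalDegree_finsetProd _ _
    _ ≤ ∑ j ∈ e.support, e j * d :=
        Finset.sum_le_sum fun j _ =>
          (totalDegree_pow _ _).trans (Nat.mul_le_mul_left _ (hp j))
    _ = (∑ j ∈ e.support, e j) * d := (Finset.sum_mul _ _ _).symm
    _ ≤ h.totalDegree * d := Nat.mul_le_mul_right d (le_totalDegree he)

theorem exists_totalDegree_le_one_eval_eq_linear_add [Finite σ]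
    (g : (σ → R) →ₗ[R] (τ → R)) (c : τ → R) :
    ∃ p : τ → MvPolynomial σ R, (∀ j, (p j).totalDegree ≤ 1) ∧
      ∀ z, g z + c = fun j => eval z (p j) := by
  classical
  have := Fintype.ofFinite σ
  refine ⟨fun j => (LinearMap.toMatrix' g).toMvPolynomial j + C (c j), fun j => ?_, fun z => ?_⟩
  · refine (totalDegree_add _ _).trans (max_le (Matrix.toMvPolynomial_totalDegree_le _ j) ?_)
    simp
  · ext j
    simp [Matrix.toMvPolynomial_eval_eq_apply, LinearMap.toMatrix'_mulVec]

end Polynomial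

section Cubature

variable {ι σ τ : Type*} [Fintype ι]

/-- The points `x i` with weights `w i` form a cubature rule of degree `t` for `μ`: polynomials of
total degree at most `t` are integrable, and the weighted sum of their values is their integral.
A `t`-design is the case of equal weights `1 / M`. Integrability is part of the definition so that
the integrals are never the junk value `0`. -/
structure IsCubature (μ : Measure (σ → ℝ)) (w : ι → ℝ) (x : ι → σ → ℝ) (t : ℕ) : Prop where
  integrable : ∀ f : MvPolynomial σ ℝ, f.totalDegree ≤ t →
    Integrable (fun y => MvPolynomial.eval y f) μ
  sum_eq_integral : ∀ f : MvPolynomial σ ℝ, f.totalDegree ≤ t →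
    ∑ i, w i * MvPolynomial.eval (x i) f = ∫ y, MvPolynomial.eval y f ∂μ

theorem IsCubature.map_polynomial {μ : Measure (σ → ℝ)} {w : ι → ℝ}
    {x : ι → σ → ℝ} {t d : ℕ} (hx : IsCubature μ w x (t * d)) {p : τ → MvPolynomial σ ℝ}
    (hp : ∀ j, (p j).totalDegree ≤ d) :
    IsCubature (μ.map fun z j => MvPolynomial.eval z (p j)) w
      (fun i j => MvPolynomial.eval (x i) (p j)) t := by
  have hT : AEMeasurable (fun z j => MvPolynomial.eval z (p j)) μ :=
    (measurable_pi_lambda _ fun j => measurable_eval (p j)).aemeasurable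
  have hmeas (h : MvPolynomial τ ℝ) : AEStronglyMeasurable (fun y => MvPolynomial.eval y h)
      (μ.map fun z j => MvPolynomial.eval z (p j)) :=
    (measurable_eval h).aestronglyMeasurable
  have hdeg {h : MvPolynomial τ ℝ} (hh : h.totalDegree ≤ t) :
      (MvPolynomial.bind₁ p h).totalDegree ≤ t * d :=
    (totalDegree_bind₁_le hp h).trans (Nat.mul_le_mul_right d hh)
  refine ⟨fun h hh => ?_, fun h hh => ?_⟩
  · rw [integrable_map_measure (hmeas h) hT]
    simpa only [eval_bind₁, Function.comp_def] using hx.integrable _ (hdeg hh)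
  · rw [integral_map hT (hmeas h)]
    simpa only [eval_bind₁] using hx.sum_eq_integral _ (hdeg hh)

theorem affine_pushforward_design_general [Finite σ] {μ : Measure (σ → ℝ)}
    {w : ι → ℝ} {x : ι → σ → ℝ} {t : ℕ} (hx : IsCubature μ w x t)
    (g : (σ → ℝ) →ₗ[ℝ] (τ → ℝ)) (c : τ → ℝ) :
    IsCubature (μ.map fun z => g z + c) w (fun i => g (x i) + c) t := by
  obtain ⟨p, hp, hpeval⟩ := exists_totalDegree_le_one_eval_eq_linear_add g c
  simpa only [hpeval] using IsCubature.map_polynomial (d := 1) (by rwa [mul_one]) hp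

end Cubature

/-- The image of a `t`-design under an affine map `T x = g x + c` is a
`t`-design for the pushforward measure. -/
theorem affine_pushforward_design (m n t M : ℕ) (hM : 1 ≤ M)
    (μ : Measure (Fin m → ℝ)) [IsProbabilityMeasure μ]
    (hint : ∀ f : MvPolynomial (Fin m) ℝ, Integrable (fun x => MvPolynomial.eval x f) μ)
    (x : Fin M → (Fin m → ℝ))
    (hdesign : ∀ f : MvPolynomial (Fin m) ℝ, f.totalDegree ≤ t →
      (1 / M : ℝ) * ∑ i, MvPolynomial.eval (x i) f = ∫ y, MvPolynomial.eval y f ∂μ)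
    (g : (Fin m → ℝ) →ₗ[ℝ] (Fin n → ℝ)) (c : Fin n → ℝ) :
    ∀ h : MvPolynomial (Fin n) ℝ, h.totalDegree ≤ t →
      (1 / M : ℝ) * ∑ i, MvPolynomial.eval (g (x i) + c) h =
        ∫ y, MvPolynomial.eval y h ∂(μ.map (fun z => g z + c)) := by
  simp only [Finset.mul_sum] at hdesign ⊢
  exact (affine_pushforward_design_general ⟨fun f _ => hint f, hdesign⟩ g c).sum_eq_integral
end

section
/- (Generalized Simpson rule.) Let d ≥ 2. Parametrize the (d−1)-dimensional probability simplex by T = { y ∈ ℝ^{d−1} : y_i ≥ 0 for all i, and Σ_i y_i ≤ 1 } with Lebesgue measure, via φ(y) = (y_1, …, y_{d−1}, 1 − Σ_i y_i) ∈ ℝ^d. Then for every f ∈ MvPolynomial (Fin d) ℝ with totalDegree f ≤ 2, (1/vol(T)) ∫_T f(φ(y)) dy = (1/(d² + d)) · ( Σ_{i ∈ Fin d} f(e_i) + d² · f(c) ), where e_i ∈ ℝ^d is the i-th standard basis vector, c = (1/d, …, 1/d) ∈ ℝ^d is the center of the simplex, and vol(T) = 1/(d−1)! is the Lebesgue volume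 of T. In other words, the d vertices with weight 1 together with the center with weight d² (an overall weight ratio 1 : d² : 1 : ⋯ : 1) form a 2-design for the flat measure on the d-point probability simplex. -/
open MeasureTheory

/-!
Fubini along the first coordinate turns a monomial integral over a solid simplex into a Beta
integral, which gives Dirichlet's formula `∫ ∏ xᵢ ^ aᵢ = ∏ aᵢ! / (n + ∑ aᵢ)!`. Both the integral
over the simplex and the Simpson sum are linear in the polynomial, so it suffices to compare their
values on `1`, `Xᵢ` and `Xᵢ Xⱼ`; the weight `d²` of the center is what makes the ratio of the
moments of `Xᵢ ^ 2` and `Xᵢ Xⱼ` equal to `2`.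
-/

theorem integral_pow_mul_one_sub_pow (p q : ℕ) :
    ∫ x in (0 : ℝ)..1, x ^ p * (1 - x) ^ q =
      (p.factorial * q.factorial / (p + q + 1).factorial : ℝ) := by
  have beta_eq : ((∫ x in (0 : ℝ)..1, x ^ p * (1 - x) ^ q : ℝ) : ℂ) =
      Complex.betaIntegral (p + 1) (q + 1) := by
    simp [Complex.betaIntegral, ← intervalIntegral.integral_ofReal]
  have args_add : (p + 1 + (q + 1) : ℂ) = (p + q + 1 : ℕ) + 1 := by push_cast; ring
  have re_pos (m : ℕ) : 0 < (m + 1 : ℂ).re := by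
    simpa using m.cast_add_one_pos (α := ℝ)
  rw [Complex.betaIntegral_eq_Gamma_mul_div _ _ (re_pos p) (re_pos q), args_add] at beta_eq
  simp only [Complex.Gamma_nat_eq_factorial] at beta_eq
  apply Complex.ofReal_injective
  simpa using beta_eq

theorem integral_pow_mul_sub_pow (p q : ℕ) (t : ℝ) :
    ∫ x in (0 : ℝ)..t, x ^ p * (t - x) ^ q =
      t ^ (p + q + 1) * (p.factorial * q.factorial / (p + q + 1).factorial) := by
  calc ∫ x in (0 : ℝ)..t, x ^ p * (t - x) ^ q
      = t * ∫ u in (0 : ℝ)..1, (t * u) ^ p * (t - t * u) ^ q := by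
        simpa using (intervalIntegral.mul_integral_comp_mul_left (a := 0) (b := 1)
          (f := fun x ↦ x ^ p * (t - x) ^ q) t).symm
    _ = t * ∫ u in (0 : ℝ)..1, t ^ (p + q) * (u ^ p * (1 - u) ^ q) := by
        congr! 3 with u
        rw [← mul_one_sub, mul_pow, mul_pow, pow_add]
        ring
    _ = _ := by
        rw [intervalIntegral.integral_const_mul, integral_pow_mul_one_sub_pow, pow_succ']
        ring

/-- The solid simplex of size `t`: the region under the hyperplane `∑ i, y i = t` in the
nonnegative orthant. -/
def solidSimplex (ι : Type*) [Fintype ι] (t : ℝ) : Set (ι → ℝ) :=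
  {y | (∀ i, 0 ≤ y i) ∧ ∑ i, y i ≤ t}

section SolidSimplex

variable {ι : Type*} [Fintype ι]

theorem isClosed_solidSimplex (t : ℝ) : IsClosed (solidSimplex ι t) := by
  simp only [solidSimplex, Set.ofPred_and, Set.ofPred_forall]
  exact (isClosed_iInter fun i ↦ isClosed_le continuous_const (continuous_apply i)).inter
    (isClosed_le (by fun_prop) continuous_const)

theorem measurableSet_solidSimplex (t : ℝ) : MeasurableSet (solidSimplex ι t) :=
  (isClosed_solidSimplex t).measurableSet

theorem solidSimplex_subset_Icc (t : ℝ) : solidSimplex ι t ⊆ Set.Icc 0 (fun _ ↦ t) :=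
  fun _ ⟨nonneg, sum_le⟩ ↦ ⟨nonneg, fun i ↦
    (Finset.single_le_sum (fun j _ ↦ nonneg j) (Finset.mem_univ i)).trans sum_le⟩

theorem isCompact_solidSimplex (t : ℝ) : IsCompact (solidSimplex ι t) :=
  isCompact_Icc.of_isClosed_subset (isClosed_solidSimplex t) (solidSimplex_subset_Icc t)

theorem solidSimplex_eq_univ [IsEmpty ι] {t : ℝ} (ht : 0 ≤ t) :
    solidSimplex ι t = Set.univ := by
  simp [solidSimplex, ht]

theorem cons_mem_solidSimplex {n : ℕ} {t x : ℝ} {y : Fin n → ℝ} :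
    Fin.cons x y ∈ solidSimplex (Fin (n + 1)) t ↔
      x ∈ Set.Icc 0 t ∧ y ∈ solidSimplex (Fin n) (t - x) := by
  simp only [solidSimplex, Set.mem_ofPred_eq, Set.mem_Icc, Fin.forall_fin_succ, Fin.cons_zero,
    Fin.cons_succ, Fin.sum_univ_succ, le_sub_iff_add_le']
  refine ⟨fun ⟨⟨hx, hy⟩, hsum⟩ ↦ ⟨⟨hx, ?_⟩, hy, hsum⟩, fun ⟨⟨hx, _⟩, hy, hsum⟩ ↦ ⟨⟨hx, hy⟩, hsum⟩⟩
  linarith [Finset.sum_nonneg fun i (_ : i ∈ Finset.univ) ↦ hy i]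

theorem setIntegral_solidSimplex_succ {E : Type*} [NormedAddCommGroup E] [NormedSpace ℝ E]
    {n : ℕ} {t : ℝ} (ht : 0 ≤ t) {g : (Fin (n + 1) → ℝ) → E}
    (hg : IntegrableOn g (solidSimplex (Fin (n + 1)) t)) :
    ∫ y in solidSimplex (Fin (n + 1)) t, g y =
      ∫ x in 0..t, ∫ y in solidSimplex (Fin n) (t - x), g (Fin.cons x y) := by
  let e := (MeasurableEquiv.piFinSuccAbove (fun _ : Fin (n + 1) ↦ ℝ) 0).symm
  have he : MeasurePreserving e := (volume_preserving_piFinSuccAbove (fun _ ↦ ℝ) 0).symm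
  have e_apply (x : ℝ) (y : Fin n → ℝ) : e (x, y) = Fin.cons x y := by
    simp [e, Fin.insertNthEquiv]
  have hint : Integrable (fun z ↦ (solidSimplex (Fin (n + 1)) t).indicator g (e z)) :=
    he.integrable_comp_of_integrable (hg.integrable_indicator (measurableSet_solidSimplex t))
  rw [← integral_indicator (measurableSet_solidSimplex t), ← he.integral_comp',
    Measure.volume_eq_prod, integral_prod _ hint, intervalIntegral.integral_of_le ht,
    ← integral_Icc_eq_integral_Ioc, ← integral_indicator measurableSet_Icc]
  congr 1 with x
  simp only [e_apply]
  by_cases hx : x ∈ Set.Icc 0 t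
  · rw [Set.indicator_of_mem hx, ← integral_indicator (measurableSet_solidSimplex _)]
    classical
    simp only [Set.indicator_apply, cons_mem_solidSimplex, hx, true_and]
  · simp [cons_mem_solidSimplex, hx]

end SolidSimplex

/-- The parametrization of the simplex `{x | (∀ i, 0 ≤ x i) ∧ ∑ i, x i = t}` by its first `n`
coordinates `y ∈ solidSimplex (Fin n) t`. -/
def simplexPoint {n : ℕ} (t : ℝ) (y : Fin n → ℝ) : Fin (n + 1) → ℝ :=
  Fin.snoc y (t - ∑ i, y i)

section SimplexPoint

variable {n : ℕ}

theorem simplexPoint_cons (t x : ℝ) (y : Fin n → ℝ) :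
    simplexPoint t (Fin.cons x y : Fin (n + 1) → ℝ) =
      (Fin.cons x (simplexPoint (t - x) y) : Fin (n + 2) → ℝ) := by
  simp [simplexPoint, Fin.cons_snoc_eq_snoc_cons, Fin.sum_univ_succ, sub_sub]

theorem continuous_simplexPoint (t : ℝ) : Continuous (simplexPoint (n := n) t) := by
  unfold simplexPoint
  fun_prop

theorem integrableOn_comp_simplexPoint {E : Type*} [NormedAddCommGroup E]
    {g : (Fin (n + 1) → ℝ) → E} (hg : Continuous g) (t : ℝ) :
    IntegrableOn (fun y ↦ g (simplexPoint t y)) (solidSimplex (Fin n) t) :=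
  (hg.comp (continuous_simplexPoint t)).continuousOn.integrableOn_compact (isCompact_solidSimplex t)

theorem setIntegral_prod_pow_simplexPoint {t : ℝ} (ht : 0 ≤ t) (a : Fin (n + 1) → ℕ) :
    ∫ y in solidSimplex (Fin n) t, ∏ i, simplexPoint t y i ^ a i =
      t ^ (n + ∑ i, a i) * ((∏ i, (a i).factorial) / (n + ∑ i, a i).factorial) := by
  induction n generalizing t with
  | zero =>
    have hfac : ((a 0).factorial : ℝ) ≠ 0 := by positivity
    simp [solidSimplex_eq_univ ht, integral_unique, simplexPoint, Fin.snoc, hfac, measureReal_def,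
      volume_pi]
  | succ n ih =>
    set m := n + ∑ i : Fin (n + 1), a i.succ with hm
    have slice (x : ℝ) (hx : x ∈ Set.uIcc 0 t) :
        ∫ y in solidSimplex (Fin n) (t - x),
            ∏ i, simplexPoint t (Fin.cons x y : Fin (n + 1) → ℝ) i ^ a i =
          x ^ a 0 * (t - x) ^ m * ((∏ i : Fin (n + 1), (a i.succ).factorial) / m.factorial) := by
      rw [Set.uIcc_of_le ht] at hx
      simp only [simplexPoint_cons, Fin.prod_univ_succ (n := n + 1), Fin.cons_zero, Fin.cons_succ]
      rw [integral_const_mul, ih (sub_nonneg.2 hx.2), ← hm, mul_assoc]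
    rw [setIntegral_solidSimplex_succ ht
        (integrableOn_comp_simplexPoint (g := fun x ↦ ∏ i, x i ^ a i) (by fun_prop) t),
      intervalIntegral.integral_congr slice, intervalIntegral.integral_mul_const,
      integral_pow_mul_sub_pow]
    have degree_eq : n + 1 + ∑ i, a i = a 0 + m + 1 := by rw [Fin.sum_univ_succ]; omega
    rw [degree_eq, Fin.prod_univ_succ (n := n + 1)]
    push_cast
    field_simp

theorem volume_solidSimplex {t : ℝ} (ht : 0 ≤ t) :
    volume (solidSimplex (Fin n) t) = ENNReal.ofReal (t ^ n / n.factorial) := by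
  rw [← ofReal_measureReal (isCompact_solidSimplex t).measure_ne_top]
  congr 1
  simpa [div_eq_mul_inv] using setIntegral_prod_pow_simplexPoint ht (0 : Fin (n + 1) → ℕ)

end SimplexPoint

section Finsupp

variable {σ : Type*}

theorem finsupp_eq_of_degree_le_two {s : σ →₀ ℕ} (hs : s.degree ≤ 2) :
    s = 0 ∨ (∃ i, s = .single i 1) ∨ ∃ i j, s = .single i 1 + .single j 1 := by
  classical
  obtain ⟨m, rfl⟩ := Multiset.toFinsupp.surjective s
  have hm : m.card ≤ 2 := m.toFinsupp_sum_eq ▸ hs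
  interval_cases hcard : m.card
  · simp [Multiset.card_eq_zero.1 hcard]
  · obtain ⟨i, rfl⟩ := Multiset.card_eq_one.1 hcard
    exact .inr (.inl ⟨i, Multiset.toFinsupp_singleton i⟩)
  · obtain ⟨i, j, rfl⟩ := Multiset.card_eq_two.1 hcard
    refine .inr (.inr ⟨i, j, ?_⟩)
    rw [Multiset.insert_eq_cons, ← Multiset.singleton_add, map_add, Multiset.toFinsupp_singleton,
      Multiset.toFinsupp_singleton]

theorem prod_factorial_single_add_single [Fintype σ] [DecidableEq σ] (i j : σ) :
    ∏ k, ((Finsupp.single i 1 + Finsupp.single j 1 : σ →₀ ℕ) k).factorial =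
      if i = j then 2 else 1 := by
  split_ifs with h
  · subst h
    simp [← Finsupp.single_add, Finsupp.single_apply, apply_ite Nat.factorial]
  · refine Finset.prod_eq_one fun k _ ↦ Nat.factorial_eq_one.2 ?_
    simp only [Finsupp.add_apply, Finsupp.single_apply]
    grind

end Finsupp

section Moments

open MvPolynomial

section LinearMap

variable {σ R M : Type*} [CommSemiring R] [AddCommMonoid M] [Module R M]
  {L L' : MvPolynomial σ R →ₗ[R] M}

theorem linearMap_apply_eq_of_totalDegree_le {n : ℕ}
    (h_monomial : ∀ s : σ →₀ ℕ, s.degree ≤ n → L (monomial s 1) = L' (monomial s 1))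
    {f : MvPolynomial σ R} (hf : f.totalDegree ≤ n) : L f = L' f := by
  rw [f.as_sum, map_sum, map_sum]
  refine Finset.sum_congr rfl fun s hs ↦ ?_
  rw [← mul_one (coeff s f), ← smul_eq_mul, ← smul_monomial, map_smul, map_smul,
    h_monomial s ((le_totalDegree hs).trans hf)]

theorem linearMap_apply_eq_of_totalDegree_le_two (h_one : L 1 = L' 1)
    (h_X : ∀ i, L (X i) = L' (X i))
    (h_X_mul_X : ∀ i j, L (X i * X j) = L' (X i * X j))
    {f : MvPolynomial σ R} (hf : f.totalDegree ≤ 2) : L f = L' f := by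
  refine linearMap_apply_eq_of_totalDegree_le (fun s hs ↦ ?_) hf
  obtain rfl | ⟨i, rfl⟩ | ⟨i, j, rfl⟩ := finsupp_eq_of_degree_le_two hs
  · exact h_one
  · exact h_X i
  · simpa [X, monomial_mul] using h_X_mul_X i j

end LinearMap

/-- Integration of polynomials over the probability simplex in `ℝ ^ (n + 1)`, with respect to the
Lebesgue measure in the first `n` coordinates. -/
noncomputable def simplexIntegral (n : ℕ) : MvPolynomial (Fin (n + 1)) ℝ →ₗ[ℝ] ℝ where
  toFun f := ∫ y in solidSimplex (Fin n) 1, eval (simplexPoint 1 y) f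
  map_add' f g := by
    simp only [map_add]
    exact integral_add (integrableOn_comp_simplexPoint (continuous_eval f) 1)
      (integrableOn_comp_simplexPoint (continuous_eval g) 1)
  map_smul' c f := by
    simp only [smul_eval, integral_const_mul, RingHom.id_apply, smul_eq_mul]

/-- The Simpson mean on the probability simplex with vertex set `σ`: the weighted mean of the values
at the vertices, each of weight `1`, and at the center, of weight `(card σ) ^ 2`. -/
noncomputable def simpsonMean (σ : Type*) [Fintype σ] [DecidableEq σ] : MvPolynomial σ ℝ →ₗ[ℝ] ℝ :=
  (1 / ((Fintype.card σ : ℝ) ^ 2 + Fintype.card σ)) •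
    (∑ i, (aeval (Pi.single i (1 : ℝ))).toLinearMap +
      (Fintype.card σ : ℝ) ^ 2 • (aeval fun _ ↦ (1 / Fintype.card σ : ℝ)).toLinearMap)

theorem simplexIntegral_monomial_one {n : ℕ} (s : Fin (n + 1) →₀ ℕ) :
    simplexIntegral n (monomial s 1) = (∏ i, (s i).factorial) / (n + s.degree).factorial := by
  simpa [simplexIntegral, eval_monomial, Finsupp.prod_fintype, Finsupp.degree_eq_sum] using
    setIntegral_prod_pow_simplexPoint zero_le_one s

theorem simplexIntegral_one (n : ℕ) : simplexIntegral n 1 = 1 / n.factorial := by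
  simpa using simplexIntegral_monomial_one (0 : Fin (n + 1) →₀ ℕ)

theorem simplexIntegral_X {n : ℕ} (i : Fin (n + 1)) :
    simplexIntegral n (X i) = 1 / (n + 1).factorial := by
  have prod_factorial : ∏ k, (Finsupp.single i 1 k).factorial = 1 := by
    simp [Finsupp.single_apply, apply_ite Nat.factorial]
  rw [X, simplexIntegral_monomial_one, prod_factorial, Finsupp.degree_single, Nat.cast_one]

theorem simplexIntegral_X_mul_X {n : ℕ} (i j : Fin (n + 1)) :
    simplexIntegral n (X i * X j) = (if i = j then 2 else 1) / (n + 2).factorial := by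
  rw [X, X, monomial_mul, one_mul, simplexIntegral_monomial_one, prod_factorial_single_add_single,
    map_add, Finsupp.degree_single, Finsupp.degree_single]
  norm_num

section SimpsonMean

variable {σ : Type*} [Fintype σ] [DecidableEq σ]

theorem simpsonMean_apply (f : MvPolynomial σ ℝ) :
    simpsonMean σ f = 1 / ((Fintype.card σ : ℝ) ^ 2 + Fintype.card σ) *
      (∑ i, eval (Pi.single i 1) f +
        (Fintype.card σ : ℝ) ^ 2 * eval (fun _ ↦ (1 / Fintype.card σ : ℝ)) f) := by
  simp [simpsonMean, ← aeval_eq_eval, mul_add]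

theorem simpsonMean_one [Nonempty σ] : simpsonMean σ 1 = 1 := by
  simp only [simpsonMean_apply, map_one, Finset.sum_const, Finset.card_univ, nsmul_eq_mul, mul_one]
  field_simp
  ring

theorem simpsonMean_X (i : σ) : simpsonMean σ (X i) = 1 / Fintype.card σ := by
  have : Nonempty σ := ⟨i⟩
  simp only [simpsonMean_apply, eval_X, Pi.single_apply, Finset.sum_ite_eq, Finset.mem_univ,
    if_true]
  field_simp
  ring

theorem simpsonMean_X_mul_X (i j : σ) :
    simpsonMean σ (X i * X j) =
      (if i = j then 2 else 1) / (Fintype.card σ * (Fintype.card σ + 1)) := by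
  have : Nonempty σ := ⟨i⟩
  have sum_vertices : ∑ k, (Pi.single k 1 : σ → ℝ) i * (Pi.single k 1 : σ → ℝ) j =
      if i = j then 1 else 0 := by
    simp [Pi.single_apply]
  simp only [simpsonMean_apply, map_mul, eval_X, sum_vertices]
  split_ifs <;> field_simp <;> norm_num

end SimpsonMean

theorem simplexIntegral_eq_simpsonMean {n : ℕ} {f : MvPolynomial (Fin (n + 1)) ℝ}
    (hf : f.totalDegree ≤ 2) :
    simplexIntegral n f = 1 / n.factorial * simpsonMean (Fin (n + 1)) f := by
  refine linearMap_apply_eq_of_totalDegree_le_two (L' := (1 / n.factorial : ℝ) • simpsonMean _)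
    ?_ (fun i ↦ ?_) (fun i j ↦ ?_) hf
  · simp [simplexIntegral_one, simpsonMean_one]
  · simp [simplexIntegral_X, simpsonMean_X, Nat.factorial_succ]
  · simp only [simplexIntegral_X_mul_X, simpsonMean_X_mul_X, Nat.factorial_succ, Nat.cast_mul,
      Nat.cast_add, Nat.cast_one, LinearMap.smul_apply, Fintype.card_fin, smul_eq_mul]
    field_simp

end Moments

/-- **generalized Simpson rule.** On the `(d−1)`-dimensional probability
simplex (of Lebesgue volume `1/(d−1)!`), the `d` vertices with weight `1` together with the
center with weight `d²` form a `2`-design for the flat measure. -/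
theorem generalized_simpson_rule (d : ℕ) (hd : 2 ≤ d) :
    volume {y : Fin (d - 1) → ℝ | (∀ i, 0 ≤ y i) ∧ ∑ i, y i ≤ 1} =
      ENNReal.ofReal (1 / (Nat.factorial (d - 1))) ∧
    ∀ f : MvPolynomial (Fin d) ℝ, f.totalDegree ≤ 2 →
      (∫ y in {y : Fin (d - 1) → ℝ | (∀ i, 0 ≤ y i) ∧ ∑ i, y i ≤ 1},
          MvPolynomial.eval
            (fun i : Fin d => if h : (i : ℕ) < d - 1 then y ⟨(i : ℕ), h⟩ else 1 - ∑ j, y j)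
            f) =
        (1 / (Nat.factorial (d - 1)) : ℝ) * ((1 / ((d : ℝ) ^ 2 + d)) *
          ((∑ i : Fin d, MvPolynomial.eval (Pi.single i (1 : ℝ)) f) +
            (d : ℝ) ^ 2 * MvPolynomial.eval (fun _ : Fin d => (1 / d : ℝ)) f)) := by
  obtain ⟨n, rfl⟩ : ∃ n, d = n + 1 := ⟨d - 1, by omega⟩
  refine ⟨?_, fun f hf ↦ ?_⟩
  · change volume (solidSimplex (Fin n) 1) = _
    rw [volume_solidSimplex zero_le_one, one_pow, Nat.add_sub_cancel]
  · change simplexIntegral n f = _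
    rw [simplexIntegral_eq_simpsonMean hf, simpsonMean_apply, Fintype.card_fin, Nat.add_sub_cancel]
end

section
/- (Simplex designs from projective designs.) Let d ≥ 1, t ≥ 1, and let (ψ_m)_{m<M} (M ≥ 1) be a complex projective t-design of unit vectors in ℂ^d. Then the decohered probability vectors p_m = (|ψ_m(i)|²)_{i ∈ Fin d} form a t-design for the flat measure on the d-point probability simplex: for every exponent vector s : Fin d → ℕ with S = Σ_i s_i ≤ t, (1/M) Σ_{m<M} ∏_{i ∈ Fin d} |ψ_m(i)|^{2 s_i} = ( ∏_i (s_i)! ) · (d−1)! / (d−1+S)!. -/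
open MeasureTheory Matrix

/-!
The law of `V ψ₀`, for `V` Haar distributed, is unitarily invariant, so distinct monomials in the
coordinates are orthogonal (multiply one coordinate by a phase), while the `2n`-th absolute moment
of a linear form `∑ aᵢ φᵢ` is a constant times `(∑ ‖aᵢ‖²) ^ n` (rotate `a` to a multiple of a basis
vector). Expanding this moment by the multinomial theorem and orthogonality, and comparing
coefficients of the `‖aᵢ‖²`, shows that `multinomial s * ∫ ∏ ‖φᵢ‖ ^ (2 * sᵢ)` depends only on
`∑ sᵢ = n`. These products sum to `∫ (∑ ‖φᵢ‖²) ^ n = 1` over the `(d + n - 1).choose n` exponents of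
degree `n`.

For a design, taking `p = q` matches the moments of degree exactly `t`; those of lower degree follow
by multiplying with a power of `∑ ‖φᵢ‖² = 1`.
-/

section Combinatorics

open Finset

variable {ι : Type*} [Fintype ι]

lemma exists_prod_comp_eq_prod_pow {κ : Type*} [Fintype κ] (s : ι → ℕ)
    (hs : ∑ i, s i = Fintype.card κ) :
    ∃ p : κ → ι, ∀ {R : Type*} [CommMonoid R] (f : ι → R), ∏ n, f (p n) = ∏ i, f i ^ s i := by
  let e : κ ≃ Σ i, Fin (s i) := Fintype.equivOfCardEq (by simp [hs])
  refine ⟨fun n => (e n).1, fun f => ?_⟩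
  rw [e.prod_comp fun x => f x.1, Fintype.prod_sigma]
  simp

lemma inv_multinomial_mul_choose_eq (hι : 0 < Fintype.card ι) (s : ι → ℕ) :
    ((Nat.multinomial univ s : ℝ) * (Fintype.card ι + ∑ i, s i - 1).choose (∑ i, s i))⁻¹ =
      (∏ i, (s i).factorial : ℝ) * (Fintype.card ι - 1).factorial /
        (Fintype.card ι - 1 + ∑ i, s i).factorial := by
  have hsum : Fintype.card ι + ∑ i, s i - 1 = Fintype.card ι - 1 + ∑ i, s i := by omega
  have hmultinomial : (∏ i, (s i).factorial : ℝ) * Nat.multinomial univ s =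
      (∑ i, s i).factorial := mod_cast Nat.multinomial_spec univ s
  have hchoose : ((Fintype.card ι - 1 + ∑ i, s i).choose (∑ i, s i) : ℝ) *
      (∑ i, s i).factorial * (Fintype.card ι - 1).factorial =
      (Fintype.card ι - 1 + ∑ i, s i).factorial := by
    have := Nat.choose_mul_factorial_mul_factorial
      (Nat.le_add_left (∑ i, s i) (Fintype.card ι - 1))
    rw [Nat.add_sub_cancel] at this
    exact_mod_cast this
  rw [hsum, ← hchoose, ← hmultinomial]
  have : (∏ i, (s i).factorial : ℝ) ≠ 0 := prod_ne_zero_iff.2 fun i _ => by positivity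
  have : ((Fintype.card ι - 1 + ∑ i, s i).choose (∑ i, s i) : ℝ) ≠ 0 :=
    mod_cast (Nat.choose_pos (Nat.le_add_left _ _)).ne'
  have : (Nat.multinomial univ s : ℝ) ≠ 0 := mod_cast (Nat.multinomial_pos _ _).ne'
  field_simp

variable [DecidableEq ι]

lemma card_piAntidiag_univ_s8 (n : ℕ) :
    #(piAntidiag (univ : Finset ι) n) = (Fintype.card ι + n - 1).choose n := by
  rw [← map_sym_eq_piAntidiag, card_map, sym_univ, card_univ, Sym.card_sym_eq_choose]

lemma eq_of_sum_piAntidiag_mul_prod_pow_eq {R : Type*} [CommRing R] [IsDomain R]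
    {A : Set R} (hA : A.Infinite) {n : ℕ} {u v : (ι → ℕ) → R}
    (h : ∀ x : ι → R, (∀ i, x i ∈ A) →
      ∑ k ∈ piAntidiag univ n, u k * ∏ i, x i ^ k i =
        ∑ k ∈ piAntidiag univ n, v k * ∏ i, x i ^ k i)
    {k : ι → ℕ} (hk : k ∈ piAntidiag univ n) : u k = v k := by
  let P (w : (ι → ℕ) → R) : MvPolynomial ι R :=
    ∑ l ∈ piAntidiag univ n, MvPolynomial.monomial (Finsupp.equivFunOnFinite.symm l) (w l)
  have eval_P (w x) : (P w).eval x = ∑ l ∈ piAntidiag univ n, w l * ∏ i, x i ^ l i := by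
    simp [P, MvPolynomial.eval_monomial, Finsupp.prod_fintype]
  have coeff_P (w) : (P w).coeff (Finsupp.equivFunOnFinite.symm k) = w k := by
    simp only [P, MvPolynomial.coeff_sum, MvPolynomial.coeff_monomial,
      EmbeddingLike.apply_eq_iff_eq]
    simp only [sum_ite_eq', hk, if_true]
  have hP : P u = P v := MvPolynomial.funext_set (fun _ => A) (fun _ => hA) fun x hx => by
    rw [eval_P, eval_P, h x fun i => hx i trivial]
  rw [← coeff_P u, hP, coeff_P]

lemma prod_norm_pow_eq_sum_piAntidiag {E : Type*} [Norm E] {φ : ι → E}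
    (hφ : ∑ i, ‖φ i‖ ^ 2 = 1) (s : ι → ℕ) (n : ℕ) :
    ∏ i, ‖φ i‖ ^ (2 * s i) =
      ∑ r ∈ piAntidiag univ n, (Nat.multinomial univ r : ℝ) * ∏ i, ‖φ i‖ ^ (2 * (s i + r i)) := by
  calc ∏ i, ‖φ i‖ ^ (2 * s i) = (∏ i, ‖φ i‖ ^ (2 * s i)) * (∑ i, ‖φ i‖ ^ 2) ^ n := by
        rw [hφ, one_pow, mul_one]
    _ = _ := by
        rw [sum_pow_eq_sum_piAntidiag, mul_sum]
        refine sum_congr rfl fun r _ => ?_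
        simp only [mul_add, pow_add, prod_mul_distrib, pow_mul]
        ring

end Combinatorics

section UnitaryGroup

variable {ι 𝕜 : Type*} [Fintype ι] [DecidableEq ι] [RCLike 𝕜]

lemma exists_mem_unitaryGroup_smul_row_eq (i : ι) (a : ι → 𝕜) :
    ∃ W ∈ Matrix.unitaryGroup ι 𝕜, (√(∑ j, ‖a j‖ ^ 2) : 𝕜) • W i = a := by
  let v : EuclideanSpace 𝕜 ι := WithLp.toLp 2 (star a)
  have norm_v : ‖v‖ = √(∑ j, ‖a j‖ ^ 2) := by simp [v, EuclideanSpace.norm_eq]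
  obtain hv | hv := eq_or_ne v 0
  · refine ⟨1, one_mem _, ?_⟩
    have ha : a = 0 := by simpa [v] using hv
    simp [ha]
  let u : EuclideanSpace 𝕜 ι := (‖v‖⁻¹ : 𝕜) • v
  have hu : Orthonormal 𝕜 (({i} : Set ι).domRestrict fun _ => u) :=
    ⟨fun _ => norm_smul_inv_norm hv, fun x y hxy => (hxy (Subsingleton.elim x y)).elim⟩
  obtain ⟨b, hb⟩ := hu.exists_orthonormalBasis_extension_of_card_eq (by simp)
  refine ⟨b.toBasis.toMatrix (EuclideanSpace.basisFun ι 𝕜),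
    b.toMatrix_orthonormalBasis_mem_unitary _, ?_⟩
  ext j
  have : (‖v‖ : 𝕜) ≠ 0 := mod_cast norm_ne_zero_iff.2 hv
  rw [← norm_v, Pi.smul_apply, Module.Basis.toMatrix_apply,
    OrthonormalBasis.coe_toBasis_repr_apply, OrthonormalBasis.repr_apply_apply, hb i rfl]
  simp [u, EuclideanSpace.inner_single_right, inner_smul_left, v, this]

lemma diagonal_update_one_mem_unitaryGroup (i : ι) {z : 𝕜} (hz : ‖z‖ = 1) :
    Matrix.diagonal (Function.update 1 i z) ∈ Matrix.unitaryGroup ι 𝕜 := by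
  rw [Matrix.mem_unitaryGroup_iff, Matrix.star_eq_conjTranspose, Matrix.diagonal_conjTranspose,
    Matrix.diagonal_mul_diagonal, ← Matrix.diagonal_one]
  congr 1
  funext k
  obtain rfl | hk := eq_or_ne k i
  · simp [RCLike.mul_conj, hz]
  · simp [hk]

lemma sum_norm_sq_mulVec_s8 {V : Matrix ι ι 𝕜} (hV : V ∈ Matrix.unitaryGroup ι 𝕜) (φ : ι → 𝕜) :
    ∑ i, ‖(V *ᵥ φ) i‖ ^ 2 = ∑ i, ‖φ i‖ ^ 2 := by
  have dotProduct_star_self (χ : ι → 𝕜) : star χ ⬝ᵥ χ = ((∑ i, ‖χ i‖ ^ 2 : ℝ) : 𝕜) := by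
    simp [dotProduct, RCLike.conj_mul]
  have h : star (V *ᵥ φ) ⬝ᵥ (V *ᵥ φ) = star φ ⬝ᵥ φ := by
    rw [Matrix.star_mulVec, ← Matrix.dotProduct_mulVec, Matrix.mulVec_mulVec,
      ← Matrix.star_eq_conjTranspose, Matrix.mem_unitaryGroup_iff'.mp hV, Matrix.one_mulVec]
  rw [dotProduct_star_self, dotProduct_star_self] at h
  exact_mod_cast h

end UnitaryGroup

lemma exists_norm_eq_one_pow_mul_conj_pow_eq_neg_one {m n : ℕ} (hmn : m ≠ n) :
    ∃ z : ℂ, ‖z‖ = 1 ∧ z ^ m * (starRingEnd ℂ) (z ^ n) = -1 := by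
  have hsub : (m - n : ℂ) ≠ 0 := sub_ne_zero.2 (mod_cast hmn)
  refine ⟨Complex.exp ((Real.pi / (m - n) : ℝ) * Complex.I), Complex.norm_exp_ofReal_mul_I _, ?_⟩
  rw [← Complex.exp_nat_mul, ← Complex.exp_nat_mul, ← Complex.exp_conj, ← Complex.exp_add,
    ← Complex.exp_pi_mul_I]
  congr 1
  simp only [map_mul, map_natCast, Complex.conj_ofReal, Complex.conj_I]
  push_cast
  field_simp
  ring

section InvariantMeasure

open Finset

variable {ι : Type*} [Fintype ι]

/-- Invariance of a measure on `ℂ^ι` under the standard action of the unitary group `U(ι)`; on the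
unit sphere it singles out the uniform measure, up to scaling. -/
def IsUnitarilyInvariant [DecidableEq ι] (ν : Measure (ι → ℂ)) : Prop :=
  ∀ W ∈ Matrix.unitaryGroup ι ℂ, MeasurePreserving (W *ᵥ ·) ν ν

/-- The `s`-th moment of the decohered probability vector `(‖φ i‖²)ᵢ` of a vector `φ` distributed
according to `ν`. The exponents of the probabilities are `s`, hence those of the norms `2 * s`. -/
noncomputable def normSqMoment (ν : Measure (ι → ℂ)) (s : ι → ℕ) : ℝ :=
  ∫ φ, ∏ i, ‖φ i‖ ^ (2 * s i) ∂ν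

variable {ν : Measure (ι → ℂ)}

lemma integrable_of_continuous_of_sum_norm_sq_eq_one {E : Type*} [NormedAddCommGroup E]
    [IsFiniteMeasure ν] (hν : ∀ᵐ φ ∂ν, ∑ i, ‖φ i‖ ^ 2 = 1)
    {f : (ι → ℂ) → E} (hf : Continuous f) : Integrable f ν := by
  obtain ⟨C, hC⟩ := (isCompact_closedBall (0 : ι → ℂ) 1).exists_bound_of_continuousOn
    hf.continuousOn
  refine .of_bound hf.aestronglyMeasurable C (hν.mono fun φ hφ => hC φ ?_)
  rw [mem_closedBall_zero_iff, pi_norm_le_iff_of_nonneg zero_le_one]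
  intro i
  rw [← sq_le_one_iff₀ (norm_nonneg _), ← hφ]
  exact single_le_sum (f := fun i => ‖φ i‖ ^ 2) (fun j _ => by positivity) (mem_univ i)

variable [DecidableEq ι]

lemma IsUnitarilyInvariant.integral_comp_mulVec {E : Type*} [NormedAddCommGroup E]
    [NormedSpace ℝ E] (h : IsUnitarilyInvariant ν)
    {W : Matrix ι ι ℂ} (hW : W ∈ Matrix.unitaryGroup ι ℂ) {f : (ι → ℂ) → E}
    (hf : Continuous f) : ∫ φ, f (W *ᵥ φ) ∂ν = ∫ φ, f φ ∂ν := by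
  rw [← integral_map (h W hW).measurable.aemeasurable hf.aestronglyMeasurable, (h W hW).map_eq]

lemma IsUnitarilyInvariant.integral_monomial_mul_conj_eq_zero (h : IsUnitarilyInvariant ν)
    {α β : ι → ℕ} (hαβ : α ≠ β) :
    ∫ φ, (∏ i, φ i ^ α i) * (starRingEnd ℂ) (∏ i, φ i ^ β i) ∂ν = 0 := by
  obtain ⟨i, hi⟩ := Function.ne_iff.1 hαβ
  obtain ⟨z, hz, hz'⟩ := exists_norm_eq_one_pow_mul_conj_pow_eq_neg_one hi
  have scale (γ : ι → ℕ) (φ : ι → ℂ) :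
      ∏ j, ((Matrix.diagonal (Function.update 1 i z)) *ᵥ φ) j ^ γ j =
        z ^ γ i * ∏ j, φ j ^ γ j := by
    simp only [Matrix.mulVec_diagonal, mul_pow, prod_mul_distrib]
    rw [Fintype.prod_eq_single i fun j hj => by simp [hj], Function.update_self]
  let f (φ : ι → ℂ) : ℂ := (∏ j, φ j ^ α j) * (starRingEnd ℂ) (∏ j, φ j ^ β j)
  have f_scale (φ : ι → ℂ) : f (Matrix.diagonal (Function.update 1 i z) *ᵥ φ) = -f φ := by
    simp only [f]
    rw [scale, scale, map_mul, mul_mul_mul_comm, hz', neg_one_mul]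
  have hinv := h.integral_comp_mulVec (diagonal_update_one_mem_unitaryGroup i hz)
    (show Continuous f by fun_prop)
  simp only [f_scale, integral_neg] at hinv
  exact neg_eq_self.1 hinv

lemma IsUnitarilyInvariant.integral_norm_dotProduct_pow (h : IsUnitarilyInvariant ν) (i : ι)
    (a : ι → ℂ) (n : ℕ) :
    ∫ φ, ‖a ⬝ᵥ φ‖ ^ (2 * n) ∂ν = (∑ j, ‖a j‖ ^ 2) ^ n * ∫ φ, ‖φ i‖ ^ (2 * n) ∂ν := by
  obtain ⟨W, hW, hWa⟩ := exists_mem_unitaryGroup_smul_row_eq i a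
  rw [← integral_const_mul, ← h.integral_comp_mulVec hW
    (f := fun φ => (∑ j, ‖a j‖ ^ 2) ^ n * ‖φ i‖ ^ (2 * n)) (by fun_prop)]
  refine integral_congr_ae (.of_forall fun φ => ?_)
  have hφ : a ⬝ᵥ φ = (√(∑ j, ‖a j‖ ^ 2) : ℂ) * (W *ᵥ φ) i := by
    rw [← smul_eq_mul, Matrix.mulVec, ← smul_dotProduct]
    exact congrArg (· ⬝ᵥ φ) hWa.symm
  dsimp only
  rw [hφ, norm_mul, mul_pow, Complex.norm_real, Real.norm_eq_abs, pow_mul, sq_abs,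
    Real.sq_sqrt (by positivity)]

lemma IsUnitarilyInvariant.integral_norm_sq_sum_monomial [IsFiniteMeasure ν]
    (h : IsUnitarilyInvariant ν) (hν : ∀ᵐ φ ∂ν, ∑ i, ‖φ i‖ ^ 2 = 1)
    (K : Finset (ι → ℕ)) (c : (ι → ℕ) → ℂ) :
    ∫ φ, ‖∑ k ∈ K, c k * ∏ i, φ i ^ k i‖ ^ 2 ∂ν = ∑ k ∈ K, ‖c k‖ ^ 2 * normSqMoment ν k := by
  have norm_sq_monomial (k : ι → ℕ) (φ : ι → ℂ) :
      (∏ i, φ i ^ k i) * (starRingEnd ℂ) (∏ i, φ i ^ k i) =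
        ((∏ i, ‖φ i‖ ^ (2 * k i) : ℝ) : ℂ) := by
    rw [map_prod, ← prod_mul_distrib]
    simp [Complex.mul_conj', ← mul_pow, pow_mul]
  have norm_sq_sum (φ : ι → ℂ) : ((‖∑ k ∈ K, c k * ∏ i, φ i ^ k i‖ ^ 2 : ℝ) : ℂ) =
      ∑ k ∈ K, ∑ l ∈ K, c k * (starRingEnd ℂ) (c l) *
        ((∏ i, φ i ^ k i) * (starRingEnd ℂ) (∏ i, φ i ^ l i)) := by
    push_cast
    rw [← Complex.mul_conj', map_sum, sum_mul_sum]
    simp only [map_mul, mul_mul_mul_comm]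
  apply Complex.ofReal_injective
  rw [← integral_complex_ofReal]
  simp_rw [norm_sq_sum]
  rw [integral_finsetSum _ fun k _ =>
    integrable_of_continuous_of_sum_norm_sq_eq_one hν (by fun_prop), Complex.ofReal_sum]
  refine sum_congr rfl fun k hk => ?_
  rw [integral_finsetSum _ fun l _ =>
    integrable_of_continuous_of_sum_norm_sq_eq_one hν (by fun_prop)]
  simp_rw [integral_const_mul]
  rw [sum_eq_single_of_mem k hk fun l _ hl => by
    rw [h.integral_monomial_mul_conj_eq_zero hl.symm, mul_zero]]
  simp_rw [norm_sq_monomial, integral_complex_ofReal, Complex.mul_conj']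
  simp only [normSqMoment, Complex.ofReal_mul, Complex.ofReal_pow]

lemma IsUnitarilyInvariant.integral_norm_dotProduct_pow_eq_sum [IsFiniteMeasure ν]
    (h : IsUnitarilyInvariant ν) (hν : ∀ᵐ φ ∂ν, ∑ i, ‖φ i‖ ^ 2 = 1) (a : ι → ℂ) (n : ℕ) :
    ∫ φ, ‖a ⬝ᵥ φ‖ ^ (2 * n) ∂ν =
      ∑ k ∈ piAntidiag univ n,
        (Nat.multinomial univ k ^ 2 * normSqMoment ν k) * ∏ i, (‖a i‖ ^ 2) ^ k i := by
  have expand (φ : ι → ℂ) : ‖a ⬝ᵥ φ‖ ^ (2 * n) =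
      ‖∑ k ∈ piAntidiag univ n,
        (Nat.multinomial univ k * ∏ i, a i ^ k i) * ∏ i, φ i ^ k i‖ ^ 2 := by
    rw [pow_mul', ← norm_pow, dotProduct, sum_pow_eq_sum_piAntidiag]
    simp only [mul_pow, prod_mul_distrib, mul_assoc]
  simp_rw [expand]
  rw [h.integral_norm_sq_sum_monomial hν]
  refine sum_congr rfl fun k _ => ?_
  simp only [norm_mul, norm_prod, norm_pow, Complex.norm_natCast, mul_pow, ← prod_pow, ← pow_mul,
    mul_comm 2]
  ring

lemma IsUnitarilyInvariant.multinomial_mul_normSqMoment [IsFiniteMeasure ν]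
    (h : IsUnitarilyInvariant ν) (hν : ∀ᵐ φ ∂ν, ∑ i, ‖φ i‖ ^ 2 = 1) (s : ι → ℕ) (i : ι) :
    Nat.multinomial univ s * normSqMoment ν s = ∫ φ, ‖φ i‖ ^ (2 * ∑ j, s j) ∂ν := by
  set n := ∑ j, s j
  have polynomial_eq (x : ι → ℝ) (hx : ∀ j, x j ∈ Set.Ici 0) :
      ∑ k ∈ piAntidiag univ n,
          (Nat.multinomial univ k ^ 2 * normSqMoment ν k) * ∏ j, x j ^ k j =
        ∑ k ∈ piAntidiag univ n,
          (Nat.multinomial univ k * ∫ φ, ‖φ i‖ ^ (2 * n) ∂ν) * ∏ j, x j ^ k j := by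
    have norm_sq_sqrt (j) : ‖(√(x j) : ℂ)‖ ^ 2 = x j := by
      rw [Complex.norm_real, Real.norm_eq_abs, sq_abs, Real.sq_sqrt (hx j)]
    have hlhs := h.integral_norm_dotProduct_pow_eq_sum hν (fun j => (√(x j) : ℂ)) n
    rw [h.integral_norm_dotProduct_pow i] at hlhs
    simp_rw [norm_sq_sqrt] at hlhs
    rw [← hlhs, sum_pow_eq_sum_piAntidiag, sum_mul]
    exact sum_congr rfl fun k _ => mul_right_comm _ _ _
  have hcoeff := eq_of_sum_piAntidiag_mul_prod_pow_eq (Set.Ici_infinite (0 : ℝ)) polynomial_eq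
    (k := s) (by simp [n])
  have : (Nat.multinomial univ s : ℝ) ≠ 0 := mod_cast (Nat.multinomial_pos _ _).ne'
  rw [sq, mul_assoc] at hcoeff
  exact mul_left_cancel₀ this hcoeff

lemma normSqMoment_eq_sum_piAntidiag [IsFiniteMeasure ν] (hν : ∀ᵐ φ ∂ν, ∑ i, ‖φ i‖ ^ 2 = 1)
    (s : ι → ℕ) (n : ℕ) :
    normSqMoment ν s =
      ∑ r ∈ piAntidiag univ n, (Nat.multinomial univ r : ℝ) * normSqMoment ν (s + r) := by
  simp only [normSqMoment, ← integral_const_mul]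
  rw [← integral_finsetSum _ fun r _ =>
    integrable_of_continuous_of_sum_norm_sq_eq_one hν (by fun_prop)]
  exact integral_congr_ae (hν.mono fun φ hφ => prod_norm_pow_eq_sum_piAntidiag hφ s n)

theorem IsUnitarilyInvariant.normSqMoment_eq_factorial_div [IsProbabilityMeasure ν]
    (h : IsUnitarilyInvariant ν) (hν : ∀ᵐ φ ∂ν, ∑ i, ‖φ i‖ ^ 2 = 1) (s : ι → ℕ) :
    normSqMoment ν s = (∏ i, (s i).factorial : ℝ) * (Fintype.card ι - 1).factorial /
      (Fintype.card ι - 1 + ∑ i, s i).factorial := by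
  obtain ⟨φ, hφ⟩ := hν.exists
  obtain ⟨i⟩ : Nonempty ι := not_isEmpty_iff.1 fun _ => by simp at hφ
  set n := ∑ j, s j
  have hcoord := h.multinomial_mul_normSqMoment hν s i
  have htotal : (Fintype.card ι + n - 1).choose n * ∫ φ, ‖φ i‖ ^ (2 * n) ∂ν = 1 := by
    have hone : normSqMoment ν 0 = 1 := by simp [normSqMoment]
    rw [← hone, normSqMoment_eq_sum_piAntidiag hν 0 n, ← card_piAntidiag_univ_s8, ← nsmul_eq_mul]
    refine (sum_eq_card_nsmul fun r hr => ?_).symm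
    rw [zero_add, h.multinomial_mul_normSqMoment hν r i, (mem_piAntidiag.1 hr).1]
  rw [← inv_multinomial_mul_choose_eq (Fintype.card_pos_iff.2 ⟨i⟩)]
  refine eq_inv_of_mul_eq_one_right ?_
  rw [mul_right_comm, hcoord, mul_comm, htotal]

end InvariantMeasure

section UnitaryOrbit

variable {ι : Type*} [Fintype ι] [DecidableEq ι]

/-- The law of `V ψ₀` for `V` distributed according to `μ`; when `μ` is the Haar probability measure
and `ψ₀` a unit vector, this is the uniform measure on the unit sphere of `ℂ^ι`. -/
noncomputable def unitaryOrbitMeasure (μ : Measure (Matrix.unitaryGroup ι ℂ)) (ψ₀ : ι → ℂ) :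
    Measure (ι → ℂ) :=
  μ.map fun V : Matrix.unitaryGroup ι ℂ => (V : Matrix ι ι ℂ) *ᵥ ψ₀

variable (μ : Measure (Matrix.unitaryGroup ι ℂ)) (ψ₀ : ι → ℂ)

lemma continuous_unitaryGroup_mulVec :
    Continuous fun V : Matrix.unitaryGroup ι ℂ => (V : Matrix ι ι ℂ) *ᵥ ψ₀ :=
  continuous_subtype_val.matrix_mulVec continuous_const

instance [IsProbabilityMeasure μ] : IsProbabilityMeasure (unitaryOrbitMeasure μ ψ₀) :=
  Measure.isProbabilityMeasure_map (continuous_unitaryGroup_mulVec ψ₀).aemeasurable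

lemma integral_unitaryOrbitMeasure {E : Type*} [NormedAddCommGroup E] [NormedSpace ℝ E]
    {f : (ι → ℂ) → E} (hf : Continuous f) :
    ∫ φ, f φ ∂unitaryOrbitMeasure μ ψ₀ = ∫ V, f ((V : Matrix ι ι ℂ) *ᵥ ψ₀) ∂μ :=
  integral_map (continuous_unitaryGroup_mulVec ψ₀).aemeasurable hf.aestronglyMeasurable

lemma isUnitarilyInvariant_unitaryOrbitMeasure [μ.IsMulLeftInvariant] :
    IsUnitarilyInvariant (unitaryOrbitMeasure μ ψ₀) := by
  intro W hW
  have hmulVec : Measurable (W *ᵥ · : (ι → ℂ) → ι → ℂ) :=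
    (continuous_const.matrix_mulVec continuous_id).measurable
  have horbit := (continuous_unitaryGroup_mulVec ψ₀).measurable
  refine ⟨hmulVec, ?_⟩
  rw [unitaryOrbitMeasure, Measure.map_map hmulVec horbit]
  conv_rhs => rw [← map_mul_left_eq_self μ ⟨W, hW⟩, Measure.map_map horbit (measurable_const_mul _)]
  congr 1
  funext V
  simp [Matrix.mulVec_mulVec]

variable {ψ₀} in
lemma ae_unitaryOrbitMeasure_sum_norm_sq (hψ₀ : ∑ i, ‖ψ₀ i‖ ^ 2 = 1) :
    ∀ᵐ φ ∂unitaryOrbitMeasure μ ψ₀, ∑ i, ‖φ i‖ ^ 2 = 1 := by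
  have hclosed : IsClosed {φ : ι → ℂ | ∑ i, ‖φ i‖ ^ 2 = 1} :=
    isClosed_eq (by fun_prop) continuous_const
  rw [unitaryOrbitMeasure,
    ae_map_iff (continuous_unitaryGroup_mulVec ψ₀).aemeasurable hclosed.measurableSet]
  exact .of_forall fun V => (sum_norm_sq_mulVec_s8 V.2 ψ₀).trans hψ₀

end UnitaryOrbit

section Design

open Finset

variable {ι κ : Type*} [Fintype ι] [Fintype κ]

theorem sum_mul_prod_norm_pow_eq_normSqMoment_of_design {ν : Measure (ι → ℂ)}
    [IsFiniteMeasure ν] (hν : ∀ᵐ φ ∂ν, ∑ i, ‖φ i‖ ^ 2 = 1) {w : κ → ℝ} {ψ : κ → ι → ℂ}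
    (hψ : ∀ m, ∑ i, ‖ψ m i‖ ^ 2 = 1) {t : ℕ}
    (hdesign : ∀ p : Fin t → ι,
      ∑ m, w m * ∏ n, ‖ψ m (p n)‖ ^ 2 = ∫ φ, ∏ n, ‖φ (p n)‖ ^ 2 ∂ν)
    {s : ι → ℕ} (hs : ∑ i, s i ≤ t) :
    ∑ m, w m * ∏ i, ‖ψ m i‖ ^ (2 * s i) = normSqMoment ν s := by
  classical
  have degree_t (r : ι → ℕ) (hr : ∑ i, r i = t) :
      ∑ m, w m * ∏ i, ‖ψ m i‖ ^ (2 * r i) = normSqMoment ν r := by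
    obtain ⟨p, hp⟩ := exists_prod_comp_eq_prod_pow (κ := Fin t) r (by simpa using hr)
    have hp_norm (φ : ι → ℂ) : ∏ n, ‖φ (p n)‖ ^ 2 = ∏ i, ‖φ i‖ ^ (2 * r i) := by
      simpa only [pow_mul] using hp fun i => ‖φ i‖ ^ 2
    simpa only [hp_norm, normSqMoment] using hdesign p
  rw [normSqMoment_eq_sum_piAntidiag hν s (t - ∑ i, s i)]
  simp_rw [prod_norm_pow_eq_sum_piAntidiag (hψ _) s (t - ∑ i, s i), mul_sum]
  rw [sum_comm]
  refine sum_congr rfl fun r hr => ?_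
  have hsr : ∑ i, (s + r) i = t := by
    simp only [Pi.add_apply, sum_add_distrib, (mem_piAntidiag.1 hr).1]
    omega
  rw [← degree_t _ hsr, mul_sum]
  exact sum_congr rfl fun m _ => mul_left_comm _ _ _

theorem simplex_design_of_projective_design_general [DecidableEq ι] {t : ℕ}
    (μ : Measure (Matrix.unitaryGroup ι ℂ)) [μ.IsMulLeftInvariant] [IsProbabilityMeasure μ]
    {ψ₀ : ι → ℂ} (hψ₀ : ∑ i, ‖ψ₀ i‖ ^ 2 = 1) (w : κ → ℝ)
    {ψ : κ → ι → ℂ} (hψ : ∀ m, ∑ i, ‖ψ m i‖ ^ 2 = 1)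
    (hdesign : ∀ p : Fin t → ι,
      ∑ m, (w m : ℂ) * ∏ n, ψ m (p n) * (starRingEnd ℂ) (ψ m (p n)) =
        ∫ V : Matrix.unitaryGroup ι ℂ, ∏ n, ((V : Matrix ι ι ℂ) *ᵥ ψ₀) (p n) *
          (starRingEnd ℂ) (((V : Matrix ι ι ℂ) *ᵥ ψ₀) (p n)) ∂μ)
    {s : ι → ℕ} (hs : ∑ i, s i ≤ t) :
    ∑ m, w m * ∏ i, ‖ψ m i‖ ^ (2 * s i) =
      (∏ i, (s i).factorial : ℝ) * (Fintype.card ι - 1).factorial /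
        (Fintype.card ι - 1 + ∑ i, s i).factorial := by
  have hsphere := ae_unitaryOrbitMeasure_sum_norm_sq μ hψ₀
  rw [← (isUnitarilyInvariant_unitaryOrbitMeasure μ ψ₀).normSqMoment_eq_factorial_div hsphere]
  refine sum_mul_prod_norm_pow_eq_normSqMoment_of_design hsphere hψ (fun p => ?_) hs
  rw [integral_unitaryOrbitMeasure μ ψ₀ (by fun_prop)]
  apply Complex.ofReal_injective
  rw [← integral_complex_ofReal]
  simpa [Complex.mul_conj'] using hdesign p

end Design

/-- **simplex designs from projective designs.** The decohered probability
vectors of a complex projective `t`-design form a `t`-design for the flat measure on the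
`d`-point probability simplex. -/
theorem simplex_design_of_projective_design
    (d t M : ℕ) (hd : 1 ≤ d) (ht : 1 ≤ t) (hM : 1 ≤ M)
    (μ : Measure (Matrix.unitaryGroup (Fin d) ℂ)) [μ.IsHaarMeasure] [IsProbabilityMeasure μ]
    (ψ₀ : Fin d → ℂ) (hψ₀ : ∑ i, ‖ψ₀ i‖ ^ 2 = 1)
    (ψ : Fin M → (Fin d → ℂ)) (hψ : ∀ m, ∑ i, ‖ψ m i‖ ^ 2 = 1)
    (hdesign : ∀ p q : Fin t → Fin d,
      (1 / M : ℂ) * ∑ m, ∏ n, ψ m (p n) * (starRingEnd ℂ) (ψ m (q n)) =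
        ∫ V : Matrix.unitaryGroup (Fin d) ℂ,
          ∏ n, (V : Matrix (Fin d) (Fin d) ℂ).mulVec ψ₀ (p n) *
            (starRingEnd ℂ) ((V : Matrix (Fin d) (Fin d) ℂ).mulVec ψ₀ (q n)) ∂μ) :
    ∀ s : Fin d → ℕ, (∑ i, s i) ≤ t →
      (1 / M : ℝ) * ∑ m, ∏ i, ‖ψ m i‖ ^ (2 * s i) =
        (∏ i, Nat.factorial (s i) : ℝ) * Nat.factorial (d - 1) /
          Nat.factorial (d - 1 + ∑ i, s i) := by
  intro s hs
  simpa [Finset.mul_sum] using simplex_design_of_projective_design_general μ hψ₀ (fun _ => 1 / M) hψ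
    (fun p => by simpa [Finset.mul_sum] using hdesign p p) hs
end

section
/- Let D ≥ 1 and let ι be an index type with D elements. For all p, q, r, s ∈ ι, the first-moment Haar integral over the unitary group is ∫_{U(ι)} U_{p,q} · conj(U_{r,s}) dHaar(U) = (if p = r ∧ q = s then 1 else 0) / D. -/
open MeasureTheory Matrix

/-!
Left invariance under a unitary `V` says that the array of moments `∫ U p q * conj (U r s)` does not
change when `U` is replaced by `V * U`. Taking for `V` the sign change of the coordinate `p` kills
the moments with `p ≠ r`, and taking permutation matrices shows that the moments with `p = r` do not
depend on `p`. The value is then read off from the orthonormality of the columns of `U`.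
-/

section UnitaryGroup

variable {ι R : Type*} [Fintype ι] [DecidableEq ι] [CommRing R] [StarRing R]

theorem diagonal_mem_unitaryGroup {d : ι → R} (hd : ∀ i, d i ∈ unitary R) :
    diagonal d ∈ unitaryGroup ι R := by
  rw [mem_unitaryGroup_iff, star_eq_conjTranspose, diagonal_conjTranspose, diagonal_mul_diagonal,
    ← diagonal_one]
  exact congrArg diagonal (funext fun i => Unitary.mul_star_self_of_mem (hd i))

theorem permMatrix_mem_unitaryGroup (σ : Equiv.Perm ι) : σ.permMatrix R ∈ unitaryGroup ι R := by
  rw [mem_unitaryGroup_iff, star_eq_conjTranspose, conjTranspose_permMatrix, ← permMatrix_mul,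
    inv_mul_cancel, permMatrix_one]

theorem sum_entry_mul_conj_entry (U : unitaryGroup ι R) (q s : ι) :
    ∑ i, U i q * starRingEnd R (U i s) = if q = s then 1 else 0 :=
  calc ∑ i, U i q * starRingEnd R (U i s)
    _ = (star U.1 * U.1) s q := Finset.sum_congr rfl fun _ _ => mul_comm _ _
    _ = if q = s then 1 else 0 := by simp only [UnitaryGroup.star_mul_self, one_apply, eq_comm]

end UnitaryGroup

section Moments

variable {ι 𝕜 : Type*} [Fintype ι] [DecidableEq ι] [RCLike 𝕜]

theorem continuous_unitaryGroup_entry (p q : ι) :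
    Continuous fun U : unitaryGroup ι 𝕜 => U p q :=
  continuous_subtype_val.matrix_elem p q

variable [MeasurableSpace (unitaryGroup ι 𝕜)] [BorelSpace (unitaryGroup ι 𝕜)]
  (μ : Measure (unitaryGroup ι 𝕜))

theorem integrable_entry_mul_conj_entry [IsFiniteMeasure μ] (p q r s : ι) :
    Integrable (fun U : unitaryGroup ι 𝕜 => U p q * starRingEnd 𝕜 (U r s)) μ := by
  have hcont : Continuous fun U : unitaryGroup ι 𝕜 => U p q * starRingEnd 𝕜 (U r s) :=
    (continuous_unitaryGroup_entry p q).mul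
      (RCLike.continuous_conj.comp (continuous_unitaryGroup_entry r s))
  refine .of_bound hcont.aestronglyMeasurable 1 (.of_forall fun U => ?_)
  rw [norm_mul, RCLike.norm_conj]
  exact mul_le_one₀ (entry_norm_bound_of_unitary U.2 p q) (norm_nonneg _)
    (entry_norm_bound_of_unitary U.2 r s)

theorem sum_integral_entry_mul_conj_entry [IsFiniteMeasure μ] (q s : ι) :
    ∑ i, ∫ U : unitaryGroup ι 𝕜, U i q * starRingEnd 𝕜 (U i s) ∂μ =
      if q = s then (μ.real Set.univ : 𝕜) else 0 := by
  rw [← integral_finsetSum _ fun i _ => integrable_entry_mul_conj_entry μ i q i s]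
  simp only [sum_entry_mul_conj_entry, integral_const, RCLike.real_smul_eq_coe_mul, mul_ite,
    mul_one, mul_zero]

variable [μ.IsMulLeftInvariant]

theorem integral_entry_mul_conj_entry_eq_zero {p r : ι} (hpr : p ≠ r) (q s : ι) :
    ∫ U : unitaryGroup ι 𝕜, U p q * starRingEnd 𝕜 (U r s) ∂μ = 0 := by
  let d : ι → 𝕜 := Function.update 1 p (-1)
  have hd : ∀ i, d i ∈ unitary 𝕜 := fun i => by
    obtain rfl | hi := eq_or_ne i p <;> simp [d, Unitary.mem_iff, *]
  let V : unitaryGroup ι 𝕜 := ⟨diagonal d, diagonal_mem_unitaryGroup hd⟩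
  have hV (U : unitaryGroup ι 𝕜) (i j : ι) : (V * U) i j = d i * U i j := diagonal_mul d U.1 i j
  have hsign : ∀ U : unitaryGroup ι 𝕜, (V * U) p q * starRingEnd 𝕜 ((V * U) r s) =
      -(U p q * starRingEnd 𝕜 (U r s)) := fun U => by simp [hV, d, hpr.symm]
  refine self_eq_neg.mp ?_
  calc ∫ U : unitaryGroup ι 𝕜, U p q * starRingEnd 𝕜 (U r s) ∂μ
    _ = ∫ U : unitaryGroup ι 𝕜, (V * U) p q * starRingEnd 𝕜 ((V * U) r s) ∂μ :=
      (integral_mul_left_eq_self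
        (fun U : unitaryGroup ι 𝕜 => U p q * starRingEnd 𝕜 (U r s)) V).symm
    _ = -∫ U : unitaryGroup ι 𝕜, U p q * starRingEnd 𝕜 (U r s) ∂μ := by
      simp only [hsign, integral_neg]

theorem integral_entry_perm_mul_conj_entry_perm (σ : Equiv.Perm ι) (p q r s : ι) :
    ∫ U : unitaryGroup ι 𝕜, U (σ p) q * starRingEnd 𝕜 (U (σ r) s) ∂μ =
      ∫ U : unitaryGroup ι 𝕜, U p q * starRingEnd 𝕜 (U r s) ∂μ := by
  let V : unitaryGroup ι 𝕜 := ⟨σ.permMatrix 𝕜, permMatrix_mem_unitaryGroup σ⟩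
  have hV (U : unitaryGroup ι 𝕜) (i j : ι) : (V * U) i j = U (σ i) j :=
    congrFun₂ (PEquiv.toMatrix_toPEquiv_mul σ U.1) i j
  simpa only [hV] using integral_mul_left_eq_self
    (fun U : unitaryGroup ι 𝕜 => U p q * starRingEnd 𝕜 (U r s)) V

theorem haar_first_moment_general [IsFiniteMeasure μ] (p q r s : ι) :
    ∫ U : unitaryGroup ι 𝕜, U p q * starRingEnd 𝕜 (U r s) ∂μ =
      (if p = r ∧ q = s then (μ.real Set.univ : 𝕜) else 0) / Fintype.card ι := by
  obtain rfl | hpr := eq_or_ne p r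
  · have : Nonempty ι := ⟨p⟩
    have hrow (i : ι) : ∫ U : unitaryGroup ι 𝕜, U i q * starRingEnd 𝕜 (U i s) ∂μ =
        ∫ U : unitaryGroup ι 𝕜, U p q * starRingEnd 𝕜 (U p s) ∂μ := by
      simpa only [Equiv.swap_apply_left] using
        integral_entry_perm_mul_conj_entry_perm μ (Equiv.swap p i) p q p s
    have hsum := sum_integral_entry_mul_conj_entry μ q s
    simp only [hrow, Finset.sum_const, Finset.card_univ, nsmul_eq_mul] at hsum
    rw [eq_div_iff (Nat.cast_ne_zero.mpr Fintype.card_ne_zero), mul_comm, hsum]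
    simp only [true_and]
  · simp only [integral_entry_mul_conj_entry_eq_zero μ hpr, hpr, false_and, if_false, zero_div]

end Moments

/-- First-moment Haar integral over the unitary group:
`∫ U_{p,q} conj(U_{r,s}) dU = δ_{pr} δ_{qs} / D`. -/
theorem haar_first_moment (D : ℕ) (hD : 1 ≤ D) (ι : Type) [Fintype ι] [DecidableEq ι]
    (hcard : Fintype.card ι = D)
    (μ : Measure (Matrix.unitaryGroup ι ℂ)) [μ.IsHaarMeasure] [IsProbabilityMeasure μ]
    (p q r s : ι) :
    ∫ U : Matrix.unitaryGroup ι ℂ, U p q * (starRingEnd ℂ) (U r s) ∂μ =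
      (if p = r ∧ q = s then (1 : ℂ) else 0) / (D : ℂ) := by
  simpa only [probReal_univ, RCLike.ofReal_one, hcard] using haar_first_moment_general μ p q r s
end

section
/- (Second-moment Weingarten formula.) Let D ≥ 2 and let ι be an index type with D elements. For all i₁, i₂, i₁', i₂', j₁, j₂, j₁', j₂' ∈ ι, ∫_{U(ι)} U_{i₁,j₁} U_{i₂,j₂} conj(U_{i₁',j₁'}) conj(U_{i₂',j₂'}) dHaar(U) = (δ_{i₁ i₁'} δ_{i₂ i₂'} δ_{j₁ j₁'} δ_{j₂ j₂'} + δ_{i₁ i₂'} δ_{i₂ i₁'} δ_{j₁ j₂'} δ_{j₂ j₁'})/(D² − 1) − (δ_{i₁ i₂'} δ_{i₂ i₁'} δ_{j₁ j₁'} δ_{j₂ j₂'} + δ_{i₁ i₁'} δ_{i₂ i₂'} δ_{j₁ j₂'} δ_{j₂ j₁'})/(D(D² − 1)). -/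
open MeasureTheory Matrix

/-- Kronecker delta with values in `ℂ`. -/
noncomputable def δ {α : Type*} [DecidableEq α] (x y : α) : ℂ := if x = y then 1 else 0

/-!
Fix the column indices. Up to a reordering of factors, the integrals form the matrix
`M = ∫ (U ⊗ U) X (U ⊗ U)ᴴ dU`, where `X` is a matrix unit. By invariance of the measure `M` commutes
with every `U ⊗ U`, and `tr M = tr X`, `tr (M F) = tr (X F)` for the swap `F` of the tensor factors.
Expanding `(1 + (ζ - 1) P) ⊗ (1 + (ζ - 1) P)` for orthogonal projections `P` and `ζ = i, -1` shows
that `M` commutes with `P ⊗ 1 + 1 ⊗ P`, hence with `A ⊗ 1 + 1 ⊗ A` for every `A`. Contracting these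
relations over the matrix units yields `D² M + D F M = tr M + tr (M F) F`. Multiplying by `F` gives
a second such equation, and the determinant of the resulting `2 × 2` system is `D² (D² - 1)`.
-/

open scoped Kronecker Matrix.Norms.L2Operator

section KroneckerCommutant

variable {m n R : Type*} [DecidableEq n] [CommRing R]

/-- The Kronecker sum `A ⊕ B`; for `A = B` it is the action of `A`, as an element of the Lie algebra
`𝔤𝔩`, on the tensor square of the standard representation. -/
def kroneckerSum [DecidableEq m] (A : Matrix m m R) (B : Matrix n n R) :
    Matrix (m × n) (m × n) R :=
  A ⊗ₖ 1 + 1 ⊗ₖ B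

/-- The operator `x ⊗ y ↦ y ⊗ x` on the tensor square of `n → R`. -/
def tensorSwap (n R : Type*) [DecidableEq n] [CommRing R] : Matrix (n × n) (n × n) R :=
  Equiv.Perm.permMatrix R (Equiv.prodComm n n)

/-- The partial trace over the first tensor factor. -/
def partialTrace [Fintype m] (M : Matrix (m × n) (m × n) R) : Matrix n n R :=
  of fun b d ↦ ∑ a, M (a, b) (a, d)

omit [DecidableEq n] in
theorem trace_partialTrace [Fintype m] [Fintype n] (M : Matrix (m × n) (m × n) R) :
    (partialTrace M).trace = M.trace := by
  simp [partialTrace, trace, Fintype.sum_prod_type_right]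

theorem tensorSwap_apply (p q : n × n) :
    tensorSwap n R p q = (1 : Matrix (n × n) (n × n) R) p.swap q := by
  simp [tensorSwap, Equiv.Perm.permMatrix, PEquiv.toMatrix_apply, one_apply]

variable [Fintype n]

theorem tensorSwap_mul_apply (M : Matrix (n × n) m R) (p : n × n) (q : m) :
    (tensorSwap n R * M) p q = M p.swap q := by
  simp [tensorSwap, Equiv.Perm.permMatrix, PEquiv.toMatrix_toPEquiv_mul]

theorem mul_tensorSwap_apply (M : Matrix m (n × n) R) (p : m) (q : n × n) :
    (M * tensorSwap n R) p q = M p q.swap := by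
  simp [tensorSwap, Equiv.Perm.permMatrix, PEquiv.mul_toMatrix_toPEquiv]

theorem tensorSwap_mul_self : tensorSwap n R * tensorSwap n R = 1 := by
  ext p q
  rw [tensorSwap_mul_apply, tensorSwap_apply, Prod.swap_swap]

theorem tensorSwap_mul_kronecker (A B : Matrix n n R) :
    tensorSwap n R * (A ⊗ₖ B) = (B ⊗ₖ A) * tensorSwap n R := by
  ext p q
  simp [tensorSwap_mul_apply, mul_tensorSwap_apply, mul_comm]

theorem commute_tensorSwap_kroneckerSum_self (A : Matrix n n R) :
    Commute (tensorSwap n R) (kroneckerSum A A) := by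
  simp only [Commute, SemiconjBy, kroneckerSum, mul_add, add_mul, tensorSwap_mul_kronecker,
    add_comm]

theorem partialTrace_kroneckerSum_mul_sub [Fintype m] [DecidableEq m] (A : Matrix m m R)
    (B : Matrix n n R) (M : Matrix (m × n) (m × n) R) :
    partialTrace (kroneckerSum A B * M) - partialTrace (M * kroneckerSum A B) =
      B * partialTrace M - partialTrace M * B := by
  ext b d
  have hA : ∑ a, ∑ k, A a k * M (k, b) (a, d) = ∑ a, ∑ k, M (a, b) (k, d) * A k a := by
    rw [Finset.sum_comm]
    simp only [mul_comm]
  have hB : ∑ a, ∑ k, B b k * M (a, k) (a, d) = ∑ k, ∑ a, B b k * M (a, k) (a, d) :=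
    Finset.sum_comm
  have hB' : ∑ a, ∑ k, M (a, b) (a, k) * B k d = ∑ k, ∑ a, M (a, b) (a, k) * B k d :=
    Finset.sum_comm
  simp [partialTrace, kroneckerSum, add_mul, mul_add, mul_apply, Fintype.sum_prod_type, one_apply,
    Finset.sum_add_distrib, Finset.mul_sum, Finset.sum_mul, hA, hB, hB']

theorem card_smul_eq_trace_smul_one_of_commute {N : Matrix n n R} (hN : ∀ A, Commute A N) :
    (Fintype.card n : R) • N = N.trace • (1 : Matrix n n R) := by
  obtain ⟨r, rfl⟩ := mem_range_scalar_of_commute_single fun i j _ ↦ hN (single i j 1)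
  simp [smul_one_eq_diagonal, trace_diagonal, ← diagonal_smul, Pi.smul_def]

variable {M : Matrix (n × n) (n × n) R}

theorem card_smul_partialTrace_of_commute (hM : ∀ A, Commute (kroneckerSum A A) M) :
    (Fintype.card n : R) • partialTrace M = M.trace • (1 : Matrix n n R) := by
  rw [← trace_partialTrace]
  refine card_smul_eq_trace_smul_one_of_commute fun A ↦ sub_eq_zero.mp ?_
  rw [← partialTrace_kroneckerSum_mul_sub A A, (hM A).eq, sub_self]

theorem card_smul_add_tensorSwap_mul_eq_partialTrace (hM : ∀ A, Commute (kroneckerSum A A) M) :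
    (Fintype.card n : R) • M + tensorSwap n R * M =
      1 ⊗ₖ partialTrace M + (1 ⊗ₖ partialTrace (M * tensorSwap n R)) * tensorSwap n R := by
  ext ⟨q, b⟩ ⟨c, d⟩
  have h : ∑ a, (kroneckerSum (single a q (1 : R)) (single a q 1) * M) (a, b) (c, d) =
      ∑ a, (M * kroneckerSum (single a q (1 : R)) (single a q 1)) (a, b) (c, d) :=
    Finset.sum_congr rfl fun a _ ↦ by rw [(hM _).eq]
  have hentries : (Fintype.card n : R) * M (q, b) (c, d) + M (b, q) (c, d) =
      (if q = c then ∑ a, M (a, b) (a, d) else 0) + if q = d then ∑ a, M (a, b) (c, a) else 0 := by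
    simpa [kroneckerSum, mul_apply, Fintype.sum_prod_type, add_mul, mul_add,
      Finset.sum_add_distrib, single_apply, one_apply, ite_and] using h
  simpa [tensorSwap_mul_apply, mul_tensorSwap_apply, partialTrace, one_apply] using hentries

theorem card_sq_smul_add_card_smul_tensorSwap_mul (hM : ∀ A, Commute (kroneckerSum A A) M) :
    (Fintype.card n : R) ^ 2 • M + (Fintype.card n : R) • (tensorSwap n R * M) =
      M.trace • 1 + (M * tensorSwap n R).trace • tensorSwap n R := by
  have hMF (A : Matrix n n R) : Commute (kroneckerSum A A) (M * tensorSwap n R) :=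
    (hM A).mul_right (commute_tensorSwap_kroneckerSum_self A).symm
  rw [sq, mul_smul, ← smul_add, card_smul_add_tensorSwap_mul_eq_partialTrace hM, smul_add,
    ← smul_mul_assoc, ← kronecker_smul, ← kronecker_smul, card_smul_partialTrace_of_commute hM,
    card_smul_partialTrace_of_commute hMF]
  simp only [kronecker_smul, one_kronecker_one, smul_mul_assoc, one_mul]

theorem card_mul_card_sq_sub_one_smul_eq (hM : ∀ A, Commute (kroneckerSum A A) M) :
    ((Fintype.card n : R) * ((Fintype.card n : R) ^ 2 - 1)) • M =
      ((Fintype.card n : R) * M.trace - (M * tensorSwap n R).trace) • 1 +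
        ((Fintype.card n : R) * (M * tensorSwap n R).trace - M.trace) • tensorSwap n R := by
  have h := card_sq_smul_add_card_smul_tensorSwap_mul hM
  have hF := congrArg (tensorSwap n R * ·) h
  simp only [mul_add, mul_smul_comm, ← mul_assoc, tensorSwap_mul_self, one_mul, mul_one] at hF
  linear_combination (norm := module) (Fintype.card n : R) • h - hF

end KroneckerCommutant

section UnitaryCommutant

theorem one_add_smul_mem_unitary_of_isStarProjection {A : Type*} [Ring A] [StarRing A] [Algebra ℂ A]
    [StarModule ℂ A] {P : A} (hP : IsStarProjection P) {ζ : ℂ} (hζ : ζ ∈ unitary ℂ) :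
    1 + (ζ - 1) • P ∈ unitary A := by
  have hPP : P * P = P := hP.isIdempotentElem.eq
  have hζζ : star ζ * ζ = 1 := Unitary.star_mul_self_of_mem hζ
  have hstar : star (1 + (ζ - 1) • P) = 1 + (star ζ - 1) • P := by
    simp [hP.isSelfAdjoint.star_eq]
  rw [Unitary.mem_iff, hstar]
  constructor <;>
  · simp only [mul_add, add_mul, mul_one, one_mul, smul_mul_smul_comm, hPP]
    match_scalars
    · rfl
    · linear_combination hζζ

variable {n : Type*} [Fintype n] [DecidableEq n]

omit [DecidableEq n] in
theorem span_isStarProjection :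
    Submodule.span ℂ {P : Matrix n n ℂ | IsStarProjection P} = ⊤ := by
  classical
  rw [eq_top_iff, ← span_selfAdjoint, Submodule.span_le]
  intro H hH
  have hH' : H.IsHermitian := hH
  rw [hH'.spectral_theorem, ← sum_single_eq_diagonal, map_sum]
  refine Submodule.sum_mem _ fun i _ ↦ ?_
  have : IsStarProjection (single i i (1 : ℂ)) := by
    simp [isStarProjection_iff, IsIdempotentElem, IsSelfAdjoint, star_eq_conjTranspose]
  rw [← mul_one ((RCLike.ofReal ∘ _) _), ← smul_eq_mul, ← smul_single, map_smul]
  exact Submodule.smul_mem _ _ (Submodule.subset_span (this.map _))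

omit [Fintype n] in
/-- The coefficients of the last two terms are chosen to cancel `P ⊗ P`, which occurs in them with
the factors `(i - 1) ^ 2 = -2 i` and `(-2) ^ 2 = 4`. -/
theorem kroneckerSum_self_eq_one_add_smul_kronecker (P : Matrix n n ℂ) :
    kroneckerSum P P = (1 + Complex.I / 2) • (1 : Matrix (n × n) (n × n) ℂ) -
      (1 + (Complex.I - 1) • P) ⊗ₖ (1 + (Complex.I - 1) • P) -
      (Complex.I / 2) • (1 + (-1 - 1 : ℂ) • P) ⊗ₖ (1 + (-1 - 1 : ℂ) • P) := by
  simp only [kroneckerSum, add_kronecker, kronecker_add, smul_kronecker, kronecker_smul,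
    one_kronecker_one]
  match_scalars
  · ring
  · ring
  · ring
  · linear_combination Complex.I_sq

theorem commute_kroneckerSum_self_of_commute_unitary {M : Matrix (n × n) (n × n) ℂ}
    (hM : ∀ U ∈ unitaryGroup n ℂ, Commute (U ⊗ₖ U) M) (A : Matrix n n ℂ) :
    Commute (kroneckerSum A A) M := by
  have hA : A ∈ Submodule.span ℂ {P : Matrix n n ℂ | IsStarProjection P} := by
    rw [span_isStarProjection]
    exact Submodule.mem_top
  induction hA using Submodule.span_induction with
  | zero => simp [kroneckerSum]
  | add B C _ _ hB hC =>
    have : kroneckerSum (B + C) (B + C) = kroneckerSum B B + kroneckerSum C C := by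
      simp only [kroneckerSum, add_kronecker, kronecker_add]
      abel
    exact this ▸ hB.add_left hC
  | smul c B _ hB =>
    have : kroneckerSum (c • B) (c • B) = c • kroneckerSum B B := by
      simp only [kroneckerSum, smul_kronecker, kronecker_smul, smul_add]
    exact this ▸ hB.smul_left c
  | mem P hP =>
    have hP' {ζ : ℂ} (hζ : ζ ∈ unitary ℂ) :
        Commute ((1 + (ζ - 1) • P) ⊗ₖ (1 + (ζ - 1) • P)) M :=
      hM _ (one_add_smul_mem_unitary_of_isStarProjection hP hζ)
    rw [kroneckerSum_self_eq_one_add_smul_kronecker]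
    exact (((Commute.one_left M).smul_left _).sub_left (hP' (by simp [Unitary.mem_iff]))).sub_left
      ((hP' (by simp [Unitary.mem_iff])).smul_left _)

end UnitaryCommutant

section Twirl

variable {G m : Type*} [Group G] [TopologicalSpace G] [MeasurableSpace G]
  [Fintype m] [DecidableEq m]

/-- The average of the conjugates of `X` under a unitary representation `ρ`. The integral is taken
with respect to the operator norm; see `twirl_apply` for its entries. -/
noncomputable def twirl (μ : Measure G) (ρ : G →ₜ* unitaryGroup m ℂ) (X : Matrix m m ℂ) :
    Matrix m m ℂ :=
  ∫ g, (ρ g : Matrix m m ℂ) * X * star (ρ g : Matrix m m ℂ) ∂μ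

variable [OpensMeasurableSpace G] {μ : Measure G} (ρ : G →ₜ* unitaryGroup m ℂ) (X : Matrix m m ℂ)

theorem integrable_unitary_conj [IsFiniteMeasure μ] :
    Integrable (fun g ↦ (ρ g : Matrix m m ℂ) * X * star (ρ g : Matrix m m ℂ)) μ := by
  have hρ : Continuous fun g ↦ (ρ g : Matrix m m ℂ) :=
    continuous_subtype_val.comp ρ.continuous_toFun
  refine .of_bound ((hρ.mul continuous_const).mul hρ.star).aestronglyMeasurable ‖X‖ <|
    .of_forall fun g ↦ ?_
  rw [CStarRing.norm_mul_mem_unitary _ (Unitary.star_mem (ρ g).2),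
    CStarRing.norm_mem_unitary_mul _ (ρ g).2]

theorem map_twirl [IsFiniteMeasure μ] {E : Type*} [NormedAddCommGroup E] [NormedSpace ℂ E]
    [CompleteSpace E] (φ : Matrix m m ℂ →ₗ[ℂ] E) :
    φ (twirl μ ρ X) = ∫ g, φ ((ρ g : Matrix m m ℂ) * X * star (ρ g : Matrix m m ℂ)) ∂μ :=
  (φ.toContinuousLinearMap.integral_comp_comm (integrable_unitary_conj ρ X)).symm

theorem twirl_apply [IsFiniteMeasure μ] (i j : m) :
    twirl μ ρ X i j = ∫ g, ((ρ g : Matrix m m ℂ) * X * star (ρ g : Matrix m m ℂ)) i j ∂μ :=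
  map_twirl ρ X (entryLinearMap ℂ ℂ i j)

theorem commute_twirl [IsFiniteMeasure μ] [μ.IsMulLeftInvariant] [MeasurableMul G] (h : G) :
    Commute (ρ h : Matrix m m ℂ) (twirl μ ρ X) := by
  have hX := integrable_unitary_conj (μ := μ) ρ X
  calc (ρ h : Matrix m m ℂ) * twirl μ ρ X
      = ∫ g, (ρ h : Matrix m m ℂ) * (ρ g * X * star (ρ g : Matrix m m ℂ)) ∂μ :=
        (integral_const_mul_of_integrable hX).symm
    _ = ∫ g, (ρ (h * g) : Matrix m m ℂ) * X * star (ρ (h * g) : Matrix m m ℂ) * ρ h ∂μ := by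
        simp [mul_assoc]
    _ = ∫ g, (ρ g : Matrix m m ℂ) * X * star (ρ g : Matrix m m ℂ) * ρ h ∂μ :=
        integral_mul_left_eq_self
          (fun g ↦ (ρ g : Matrix m m ℂ) * X * star (ρ g : Matrix m m ℂ) * ρ h) h
    _ = twirl μ ρ X * ρ h := integral_mul_const_of_integrable hX

theorem trace_twirl_mul [IsProbabilityMeasure μ] {B : Matrix m m ℂ}
    (hB : ∀ g, Commute (ρ g : Matrix m m ℂ) B) :
    (twirl μ ρ X * B).trace = (X * B).trace := by
  have h (g : G) : ((ρ g : Matrix m m ℂ) * X * star (ρ g : Matrix m m ℂ) * B).trace =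
      (X * B).trace := by
    rw [mul_assoc, mul_assoc, trace_mul_comm, mul_assoc, mul_assoc, ← (hB g).eq,
      ← mul_assoc (star _), Unitary.coe_star_mul_self, one_mul]
  calc (twirl μ ρ X * B).trace
      = ∫ g, ((ρ g : Matrix m m ℂ) * X * star (ρ g : Matrix m m ℂ) * B).trace ∂μ :=
        map_twirl ρ X (traceLinearMap m ℂ ℂ ∘ₗ LinearMap.mulRight ℂ B)
    _ = (X * B).trace := by simp [h]

end Twirl

section SecondMoment

variable {n : Type*} [Fintype n] [DecidableEq n]

/-- The tensor square of the standard representation of the unitary group. -/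
def unitaryTensorSquare (n : Type*) [Fintype n] [DecidableEq n] :
    unitaryGroup n ℂ →ₜ* unitaryGroup (n × n) ℂ where
  toFun U := ⟨(U : Matrix n n ℂ) ⊗ₖ (U : Matrix n n ℂ), kronecker_mem_unitary U.2 U.2⟩
  map_one' := Subtype.ext one_kronecker_one
  map_mul' _ _ := Subtype.ext <| mul_kronecker_mul ..
  continuous_toFun := by
    refine Continuous.subtype_mk (continuous_matrix fun p q ↦ ?_) _
    exact (continuous_subtype_val.matrix_elem p.1 q.1).mul
      (continuous_subtype_val.matrix_elem p.2 q.2)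

theorem coe_unitaryTensorSquare (U : unitaryGroup n ℂ) :
    (unitaryTensorSquare n U : Matrix (n × n) (n × n) ℂ) =
      (U : Matrix n n ℂ) ⊗ₖ (U : Matrix n n ℂ) :=
  rfl

variable (μ : Measure (unitaryGroup n ℂ))

theorem twirl_unitaryTensorSquare_single_apply [IsFiniteMeasure μ] (p q r s : n × n) :
    twirl μ (unitaryTensorSquare n) (single r s 1) p q =
      ∫ U : unitaryGroup n ℂ, U p.1 r.1 * U p.2 r.2 * starRingEnd ℂ (U q.1 s.1) *
        starRingEnd ℂ (U q.2 s.2) ∂μ := by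
  rw [twirl_apply]
  congr with U
  simp [coe_unitaryTensorSquare, mul_apply, single_apply, ite_and, mul_assoc]

theorem twirl_unitaryTensorSquare_eq [μ.IsMulLeftInvariant] [IsProbabilityMeasure μ]
    (X : Matrix (n × n) (n × n) ℂ) :
    ((Fintype.card n : ℂ) * ((Fintype.card n : ℂ) ^ 2 - 1)) •
        twirl μ (unitaryTensorSquare n) X =
      ((Fintype.card n : ℂ) * X.trace - (X * tensorSwap n ℂ).trace) • 1 +
        ((Fintype.card n : ℂ) * (X * tensorSwap n ℂ).trace - X.trace) • tensorSwap n ℂ := by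
  have hcomm : ∀ U ∈ unitaryGroup n ℂ, Commute (U ⊗ₖ U) (twirl μ (unitaryTensorSquare n) X) :=
    fun U hU ↦ commute_twirl (unitaryTensorSquare n) X ⟨U, hU⟩
  have htr : (twirl μ (unitaryTensorSquare n) X).trace = X.trace := by
    simpa using trace_twirl_mul (μ := μ) (unitaryTensorSquare n) X fun _ ↦ Commute.one_right _
  have hswap := trace_twirl_mul (μ := μ) (unitaryTensorSquare n) X (B := tensorSwap n ℂ) fun U ↦
    (tensorSwap_mul_kronecker (U : Matrix n n ℂ) U).symm
  rw [card_mul_card_sq_sub_one_smul_eq (commute_kroneckerSum_self_of_commute_unitary hcomm), htr,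
    hswap]

theorem δ_comm {α : Type*} [DecidableEq α] (x y : α) : δ x y = δ y x := by
  simp only [δ, eq_comm]

theorem one_prod_apply_eq_δ_mul_δ {α β : Type*} [DecidableEq α] [DecidableEq β] (p q : α × β) :
    (1 : Matrix (α × β) (α × β) ℂ) p q = δ p.1 q.1 * δ p.2 q.2 := by
  simp only [one_apply, Prod.ext_iff, δ, ite_mul, one_mul, zero_mul, ite_and]

theorem trace_single_eq_δ_mul_δ (p q : n × n) :
    (single p q (1 : ℂ)).trace = δ p.1 q.1 * δ p.2 q.2 := by
  rw [← mul_one (single p q (1 : ℂ)), trace_single_mul, one_smul, one_prod_apply_eq_δ_mul_δ,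
    δ_comm p.1, δ_comm p.2]

theorem trace_single_mul_tensorSwap_eq_δ_mul_δ (p q : n × n) :
    (single p q 1 * tensorSwap n ℂ).trace = δ p.1 q.2 * δ p.2 q.1 := by
  rw [trace_single_mul, one_smul, tensorSwap_apply, one_prod_apply_eq_δ_mul_δ, Prod.fst_swap,
    Prod.snd_swap, δ_comm p.1, δ_comm p.2]

end SecondMoment

/-- **second-moment Weingarten formula.** -/
theorem haar_second_moment (D : ℕ) (hD : 2 ≤ D) (ι : Type) [Fintype ι] [DecidableEq ι]
    (hcard : Fintype.card ι = D)
    (μ : Measure (Matrix.unitaryGroup ι ℂ)) [μ.IsHaarMeasure] [IsProbabilityMeasure μ]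
    (i₁ i₂ i₁' i₂' j₁ j₂ j₁' j₂' : ι) :
    ∫ U : Matrix.unitaryGroup ι ℂ,
        U i₁ j₁ * U i₂ j₂ * (starRingEnd ℂ) (U i₁' j₁') * (starRingEnd ℂ) (U i₂' j₂') ∂μ =
      (δ i₁ i₁' * δ i₂ i₂' * δ j₁ j₁' * δ j₂ j₂' + δ i₁ i₂' * δ i₂ i₁' * δ j₁ j₂' * δ j₂ j₁') /
          ((D : ℂ) ^ 2 - 1) -
        (δ i₁ i₂' * δ i₂ i₁' * δ j₁ j₁' * δ j₂ j₂' + δ i₁ i₁' * δ i₂ i₂' * δ j₁ j₂' * δ j₂ j₁') /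
          ((D : ℂ) * ((D : ℂ) ^ 2 - 1)) := by
  have hD0 : (D : ℂ) ≠ 0 := by exact_mod_cast (by lia : D ≠ 0)
  have hD1 : (D : ℂ) ^ 2 - 1 ≠ 0 := sub_ne_zero.mpr (by exact_mod_cast (by nlinarith : D ^ 2 ≠ 1))
  have h := congr_fun₂ (twirl_unitaryTensorSquare_eq μ (single (j₁, j₂) (j₁', j₂') 1))
    (i₁, i₂) (i₁', i₂')
  simp only [Matrix.smul_apply, Matrix.add_apply, smul_eq_mul, hcard,
    twirl_unitaryTensorSquare_single_apply, trace_single_eq_δ_mul_δ,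
    trace_single_mul_tensorSwap_eq_δ_mul_δ, tensorSwap_apply, one_prod_apply_eq_δ_mul_δ,
    Prod.fst_swap, Prod.snd_swap] at h
  rw [← mul_div_mul_left _ _ hD0, ← sub_div, eq_div_iff (mul_ne_zero hD0 hD1)]
  linear_combination h
end

section
/- (Averaged channel for t = 1; independence of the environment dimension.) Let d ≥ 1, k ≥ 1, and consider the unitary group U(Fin d × Fin k) with its Haar probability measure. Fix the environment state 0 ∈ Fin k. Then for all a, b, i, j ∈ Fin d, the entries of the Haar-averaged Choi–Jamiołkowski state satisfy (1/d) Σ_{l ∈ Fin k} ∫_{U(Fin d × Fin k)} U_{(i,l),(a,0)} · conj(U_{(j,l),(b,0)}) dHaar(U) = (if a = b ∧ i = j then 1 else 0) / d². In particular the right-hand side does not depend on k, so the Haar-averaged channel is the maximally depolarising channel for every environment dimension k; consequently a channel [1,k]-design is a channel [1,k']-design for every k'. -/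
open MeasureTheory Matrix

/-!
Left invariance of the measure under `V` says that the second moments
`E p q = ∫ U p r * conj (U q s)` form a matrix with `V * E * Vᴴ = E`. Flipping the sign of the
`p`-th coordinate shows that the off-diagonal moments vanish, and swapping two coordinates shows
that the diagonal ones agree. The latter add up to the `(s, r)` entry of `Uᴴ * U = 1`, so each
equals `δ_rs / N` for matrices of size `N`. For `N = |m| |n|`, tracing out the environment `n`
multiplies this by `|n|`, so that only the dimension `|m|` of the system remains.
-/

section UnitaryMatrices

variable {ι α : Type*} [Fintype ι] [DecidableEq ι] [CommRing α] [StarRing α]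

lemma diagonal_mem_unitaryGroup_s11 {v : ι → α} (hv : ∀ p, v p ∈ unitary α) :
    diagonal v ∈ unitaryGroup ι α := by
  simp [mem_unitaryGroup_iff, star_eq_conjTranspose, diagonal_conjTranspose,
    fun p => Unitary.mul_star_self_of_mem (hv p)]

lemma swap_mem_unitaryGroup (p q : ι) : swap α p q ∈ unitaryGroup ι α := by
  rw [mem_unitaryGroup_iff, star_eq_conjTranspose, conjTranspose_swap, swap_mul_self]

lemma sum_unitaryGroup_apply_mul_conj (U : unitaryGroup ι α) (r s : ι) :
    ∑ p, U p r * (starRingEnd α) (U p s) = if r = s then 1 else 0 := by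
  have h := congrFun₂ (UnitaryGroup.star_mul_self U) s r
  simpa [mul_apply, one_apply, starRingEnd_apply, mul_comm, eq_comm (a := s)] using h

end UnitaryMatrices

section SecondMoments

variable {ι 𝕜 : Type*} [Fintype ι] [DecidableEq ι] [RCLike 𝕜]

instance unitaryGroup_borelSpace : BorelSpace (unitaryGroup ι 𝕜) := Subtype.borelSpace _

lemma integrable_unitaryGroup_apply_mul_conj (μ : Measure (unitaryGroup ι 𝕜)) [IsFiniteMeasure μ]
    (p q r s : ι) :
    Integrable (fun U : unitaryGroup ι 𝕜 => U p r * (starRingEnd 𝕜) (U q s)) μ := by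
  have continuous_apply (p r : ι) : Continuous fun U : unitaryGroup ι 𝕜 => U p r :=
    continuous_subtype_val.matrix_elem p r
  refine .of_bound (C := 1) ?_ (.of_forall fun U => ?_)
  · exact ((continuous_apply p r).mul
      (RCLike.continuous_conj.comp (continuous_apply q s))).aestronglyMeasurable
  · rw [norm_mul, RCLike.norm_conj]
    exact mul_le_one₀ (entry_norm_bound_of_unitary U.2 p r) (norm_nonneg _)
      (entry_norm_bound_of_unitary U.2 q s)

variable (μ : Measure (unitaryGroup ι 𝕜)) [μ.IsMulLeftInvariant]

lemma integral_unitaryGroup_apply_mul_conj_of_ne {p q : ι} (hpq : p ≠ q) (r s : ι) :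
    ∫ U : unitaryGroup ι 𝕜, U p r * (starRingEnd 𝕜) (U q s) ∂μ = 0 := by
  have unitary_sign (x : ι) : (Pi.mulSingle p (-1) : ι → 𝕜) x ∈ unitary 𝕜 := by
    obtain rfl | hx := eq_or_ne x p <;> simp [Unitary.mem_iff, *]
  let V : unitaryGroup ι 𝕜 :=
    ⟨diagonal (Pi.mulSingle p (-1)), diagonal_mem_unitaryGroup_s11 unitary_sign⟩
  rw [← self_eq_neg, ← integral_neg, ← integral_mul_left_eq_self _ V]
  simp [V, diagonal_mul, hpq.symm]

lemma integral_unitaryGroup_apply_mul_conj_self_eq (p q r s : ι) :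
    ∫ U : unitaryGroup ι 𝕜, U p r * (starRingEnd 𝕜) (U p s) ∂μ =
      ∫ U : unitaryGroup ι 𝕜, U q r * (starRingEnd 𝕜) (U q s) ∂μ := by
  rw [← integral_mul_left_eq_self _ ⟨swap 𝕜 p q, swap_mem_unitaryGroup p q⟩]
  simp

variable [IsProbabilityMeasure μ]

lemma integral_unitaryGroup_apply_mul_conj_self (p r s : ι) :
    ∫ U : unitaryGroup ι 𝕜, U p r * (starRingEnd 𝕜) (U p s) ∂μ =
      if r = s then (Fintype.card ι : 𝕜)⁻¹ else 0 := by
  have : Nonempty ι := ⟨p⟩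
  have card_mul_integral : (Fintype.card ι : 𝕜) *
      ∫ U : unitaryGroup ι 𝕜, U p r * (starRingEnd 𝕜) (U p s) ∂μ = if r = s then 1 else 0 := calc
    _ = ∑ q, ∫ U : unitaryGroup ι 𝕜, U q r * (starRingEnd 𝕜) (U q s) ∂μ := by
      simp [integral_unitaryGroup_apply_mul_conj_self_eq μ _ p]
    _ = ∫ U : unitaryGroup ι 𝕜, ∑ q, U q r * (starRingEnd 𝕜) (U q s) ∂μ :=
      (integral_finsetSum _ fun q _ => integrable_unitaryGroup_apply_mul_conj μ q q r s).symm
    _ = if r = s then 1 else 0 := by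
      simp [sum_unitaryGroup_apply_mul_conj]
  rw [(eq_inv_mul_iff_mul_eq₀ (by simp)).mpr card_mul_integral, mul_ite, mul_one, mul_zero]

theorem integral_unitaryGroup_apply_mul_conj (p q r s : ι) :
    ∫ U : unitaryGroup ι 𝕜, U p r * (starRingEnd 𝕜) (U q s) ∂μ =
      if r = s ∧ p = q then (Fintype.card ι : 𝕜)⁻¹ else 0 := by
  obtain rfl | hpq := eq_or_ne p q
  · simp [integral_unitaryGroup_apply_mul_conj_self]
  · simp [integral_unitaryGroup_apply_mul_conj_of_ne μ hpq, hpq]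

end SecondMoments

theorem averaged_choi_t_one_general {m n 𝕜 : Type*} [Fintype m] [DecidableEq m] [Fintype n]
    [DecidableEq n] [RCLike 𝕜] (μ : Measure (unitaryGroup (m × n) 𝕜)) [μ.IsMulLeftInvariant]
    [IsProbabilityMeasure μ] (a b i j : m) (e : n) :
    (1 / Fintype.card m : 𝕜) * ∑ l : n,
        ∫ U : unitaryGroup (m × n) 𝕜, U (i, l) (a, e) * (starRingEnd 𝕜) (U (j, l) (b, e)) ∂μ =
      (if a = b ∧ i = j then 1 else 0) / (Fintype.card m : 𝕜) ^ 2 := by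
  have : Nonempty m := ⟨a⟩
  have : Nonempty n := ⟨e⟩
  have card_m_ne_zero : (Fintype.card m : 𝕜) ≠ 0 := by simp
  have card_n_ne_zero : (Fintype.card n : 𝕜) ≠ 0 := by simp
  simp only [integral_unitaryGroup_apply_mul_conj, Prod.mk.injEq, and_true, Finset.sum_const,
    Finset.card_univ, nsmul_eq_mul, Fintype.card_prod, Nat.cast_mul]
  split_ifs
  · field_simp
  · simp

/-- The Haar-averaged channel (Choi–Jamiołkowski state) for `t = 1` is the
maximally depolarising channel, independently of the environment dimension `k`; hence a
channel `[1,k]`-design is a channel `[1,k']`-design for every `k'`. -/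
theorem averaged_choi_t_one (d k : ℕ) (hd : 1 ≤ d) (hk : 1 ≤ k)
    (μ : Measure (Matrix.unitaryGroup (Fin d × Fin k) ℂ)) [μ.IsHaarMeasure]
    [IsProbabilityMeasure μ] (a b i j : Fin d) :
    (1 / d : ℂ) * ∑ l : Fin k,
        ∫ U : Matrix.unitaryGroup (Fin d × Fin k) ℂ,
          U (i, l) (a, (⟨0, hk⟩ : Fin k)) *
            (starRingEnd ℂ) (U (j, l) (b, (⟨0, hk⟩ : Fin k))) ∂μ =
      (if a = b ∧ i = j then (1 : ℂ) else 0) / (d : ℂ) ^ 2 := by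
  simpa only [Fintype.card_fin] using averaged_choi_t_one_general μ a b i j ⟨0, hk⟩
end
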